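/- For every integer r with 2 ≤ r ≤ 6, every finite simple graph that has no K_r minor is generically (r−2)-stress free. -/

import Mathlib

open scoped Classical

/-- `H` is a minor of `G`: there is a family of pairwise disjoint nonempty connected
"branch sets" in `G`, one for each vertex of `H`, such that every edge of `H` is
realized by an edge of `G` between the corresponding branch sets. -/
def HasMinor {V W : Type*} (G : SimpleGraph V) (H : SimpleGraph W) : Prop :=
  ∃ B : W → Set V,
    (∀ i, (B i).Nonempty) ∧
    (∀ i j, i ≠ j → Disjoint (B i) (B j)) ∧
    (∀ i, (G.induce (B i)).Connected) ∧
    (∀ i j, H.Adj i j → ∃ x ∈ B i, ∃ y ∈ B j, G.Adj x y)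

/-- `w : E(G) → ℝ` is a stress of the embedding `f : V → ℝ^d`. -/
noncomputable def IsStress {V : Type*} [Fintype V] (G : SimpleGraph V) (d : ℕ)
    (f : V → EuclideanSpace ℝ (Fin d)) (w : G.edgeSet → ℝ) : Prop :=
  ∀ v : V,
    (∑ u : V, if h : G.Adj v u then w ⟨s(v, u), G.mem_edgeSet.mpr h⟩ • (f v - f u) else 0) = 0

/-- The set of `d`-embeddings of `G` whose only stress is the zero function. -/
def StressFreeEmbeddings {V : Type*} [Fintype V] (G : SimpleGraph V) (d : ℕ) :
    Set (V → EuclideanSpace ℝ (Fin d)) :=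
  {f | ∀ w : G.edgeSet → ℝ, IsStress G d f w → w = 0}

/-- `G` is generically `d`-stress free: the set of `d`-embeddings with no nonzero
stress is open and dense in the space of all `d`-embeddings. -/
def GenericallyStressFree {V : Type*} [Fintype V] (G : SimpleGraph V) (d : ℕ) : Prop :=
  IsOpen (StressFreeEmbeddings G d) ∧ Dense (StressFreeEmbeddings G d)

/-!
In a graph without `K_r` minor, `r ≤ 6`, that has an edge, some edge lies in at most `r - 3`
triangles. For `r < 6` this follows from the case `r = 6` by adding a cone vertex. For `r = 6`, if
all edges lay in at least four triangles, then Mader's bound of `4n - 10` edges would give a vertex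
of degree at most seven, whose neighbourhood has minimum degree four and no `K₅` minor, hence is an
octahedron or a pentagonal bipyramid. Adding any edge to either of these creates a `K₅` minor, so
each component of the rest of the graph attaches to a clique, of at most three vertices. Together
with this clique the component is a smaller graph, so by induction it contains an edge in few
triangles that is not inside the clique.

Contracting an edge in at most `d - 1` triangles preserves the absence of a `K_r` minor, and undoing
the contraction is a vertex split, which by Whiteley's argument preserves the existence of a
placement in `ℝ^d` without stress. Since injectivity of a linear map that depends linearly on a
parameter is an open condition, and holds densely as soon as it holds once, one such placement is
enough.
-/

namespace KrMinor

/-! ### Minors -/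

/-- The branch sets `B` realise `H` as a minor of `G`. Nonemptiness of the branch sets is part of
connectedness. -/
structure IsMinorModel {V W : Type*} (G : SimpleGraph V) (H : SimpleGraph W) (B : W → Set V) :
    Prop where
  disjoint : ∀ i j, i ≠ j → Disjoint (B i) (B j)
  connected : ∀ i, (G.induce (B i)).Connected
  exists_adj : ∀ i j, H.Adj i j → ∃ x ∈ B i, ∃ y ∈ B j, G.Adj x y

section Minors

variable {U V W : Type*} {G : SimpleGraph V} {H : SimpleGraph W}

theorem hasMinor_iff_exists_model : HasMinor G H ↔ ∃ B, IsMinorModel G H B :=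
  ⟨fun ⟨B, _, hd, hc, ha⟩ => ⟨B, hd, hc, ha⟩,
    fun ⟨B, hB⟩ => ⟨B, fun i => Set.nonempty_coe_sort.1 (hB.connected i).nonempty, hB.disjoint,
      hB.connected, hB.exists_adj⟩⟩

theorem connected_induce_singleton (G : SimpleGraph V) (v : V) : (G.induce {v}).Connected := by
  rw [SimpleGraph.induce_singleton_eq_top]
  exact SimpleGraph.connected_top

theorem connected_induce_insert {s : Set V} {v x : V} (hs : (G.induce s).Connected) (hx : x ∈ s)
    (hvx : G.Adj v x) : (G.induce (insert v s)).Connected := by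
  rw [Set.insert_eq]
  exact SimpleGraph.connected_induce_union (connected_induce_singleton G v).preconnected
    hs.preconnected rfl hx hvx

theorem connected_induce_of_isClique {s : Set V} (hs : G.IsClique s) (hne : s.Nonempty) :
    (G.induce s).Connected := by
  have := hne.to_subtype
  rw [SimpleGraph.induce_eq_top.2 hs]
  exact SimpleGraph.connected_top

theorem connected_induce_biUnion {B : W → Set V} (hB : IsMinorModel G H B) {S : Set W}
    (hS : (H.induce S).Connected) : (G.induce (⋃ i ∈ S, B i)).Connected := by
  have hsub {i : W} (hi : i ∈ S) : B i ⊆ ⋃ i ∈ S, B i := Set.subset_biUnion_of_mem hi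
  have reach_same {i : W} (hi : i ∈ S) {x y : V} (hx : x ∈ B i) (hy : y ∈ B i) :
      (G.induce (⋃ i ∈ S, B i)).Reachable ⟨x, hsub hi hx⟩ ⟨y, hsub hi hy⟩ :=
    ((hB.connected i).preconnected ⟨x, hx⟩ ⟨y, hy⟩).map (G.induceHomOfLE (hsub hi)).toHom
  have reach_walk {i j : S} (p : (H.induce S).Walk i j) {x y : V} (hx : x ∈ B i) (hy : y ∈ B j) :
      (G.induce (⋃ i ∈ S, B i)).Reachable ⟨x, hsub i.2 hx⟩ ⟨y, hsub j.2 hy⟩ := by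
    induction p generalizing x with
    | @nil i => exact reach_same i.2 hx hy
    | @cons i k j hik _ ih =>
      obtain ⟨a, ha, b, hb, hab⟩ := hB.exists_adj i k hik
      have hab' : (G.induce (⋃ i ∈ S, B i)).Adj ⟨a, hsub i.2 ha⟩ ⟨b, hsub k.2 hb⟩ := hab
      exact (reach_same i.2 hx ha).trans (hab'.reachable.trans (ih hb hy))
  obtain ⟨i⟩ := hS.nonempty
  obtain ⟨x⟩ := (hB.connected i).nonempty
  refine @SimpleGraph.Connected.mk _ _ ?_ ⟨⟨x, hsub i.2 x.2⟩⟩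
  rintro ⟨x, hx⟩ ⟨y, hy⟩
  obtain ⟨i, hi, hx⟩ := Set.mem_iUnion₂.1 hx
  obtain ⟨j, hj, hy⟩ := Set.mem_iUnion₂.1 hy
  obtain ⟨p⟩ := hS.preconnected ⟨i, hi⟩ ⟨j, hj⟩
  exact reach_walk p hx hy

theorem _root_.HasMinor.trans {F : SimpleGraph U} (hFG : HasMinor F G) (hGH : HasMinor G H) :
    HasMinor F H := by
  obtain ⟨B, hB⟩ := hasMinor_iff_exists_model.1 hFG
  obtain ⟨C, hC⟩ := hasMinor_iff_exists_model.1 hGH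
  refine hasMinor_iff_exists_model.2 ⟨fun k => ⋃ i ∈ C k, B i, ?_,
    fun k => connected_induce_biUnion hB (hC.connected k), ?_⟩
  · intro k l hkl
    simp only [Set.disjoint_iUnion_left, Set.disjoint_iUnion_right]
    intro i hi j hj
    exact hB.disjoint _ _ fun h => (Set.disjoint_left.1 (hC.disjoint k l hkl) hj (h ▸ hi)).elim
  · intro k l hkl
    obtain ⟨i, hi, j, hj, hij⟩ := hC.exists_adj k l hkl
    obtain ⟨x, hx, y, hy, hxy⟩ := hB.exists_adj i j hij
    exact ⟨x, Set.mem_biUnion hi hx, y, Set.mem_biUnion hj hy, hxy⟩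

theorem hasMinor_of_injective_hom (f : H →g G) (hf : Function.Injective f) : HasMinor G H :=
  hasMinor_iff_exists_model.2 ⟨fun i => {f i},
    fun _ _ hij => Set.disjoint_singleton.2 (hf.ne hij),
    fun i => connected_induce_singleton G (f i),
    fun _ _ hij => ⟨_, rfl, _, rfl, f.map_adj hij⟩⟩

theorem hasMinor_of_le {G₁ G₂ : SimpleGraph V} (h : G₁ ≤ G₂) : HasMinor G₂ G₁ :=
  hasMinor_of_injective_hom (.ofLE h) Function.injective_id

theorem hasMinor_induce (G : SimpleGraph V) (T : Set V) : HasMinor G (G.induce T) :=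
  hasMinor_of_injective_hom (SimpleGraph.Embedding.induce T).toHom Subtype.val_injective

theorem hasMinor_map {f : V → W} (hf : ∀ w, (G.induce (f ⁻¹' {w})).Connected) :
    HasMinor G (G.map f) := by
  refine hasMinor_iff_exists_model.2 ⟨fun w => f ⁻¹' {w}, fun i j hij => ?_, hf, ?_⟩
  · exact Disjoint.preimage f (Set.disjoint_singleton.2 hij)
  · rintro _ _ ⟨_, x, y, hxy, rfl, rfl⟩
    exact ⟨x, rfl, y, rfl, hxy⟩

theorem IsMinorModel.hasMinor_induce {B : W → Set V} (hB : IsMinorModel G H B) {T : Set V}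
    (hT : ∀ i, B i ⊆ T) : HasMinor (G.induce T) H := by
  refine hasMinor_iff_exists_model.2 ⟨fun i => Subtype.val ⁻¹' B i, fun i j hij => ?_, fun i => ?_,
    fun i j hij => ?_⟩
  · exact Disjoint.preimage _ (hB.disjoint i j hij)
  · let f : G.induce (B i) →g (G.induce T).induce (Subtype.val ⁻¹' B i) :=
      ⟨fun x => ⟨⟨x, hT i x.2⟩, x.2⟩, fun h => h⟩
    exact (hB.connected i).map f fun x => ⟨⟨x, x.2⟩, rfl⟩
  · obtain ⟨x, hx, y, hy, hxy⟩ := hB.exists_adj i j hij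
    exact ⟨⟨x, hT i hx⟩, hx, ⟨y, hT j hy⟩, hy, hxy⟩

theorem hasMinor_induce_iff {T : Set V} :
    HasMinor (G.induce T) H ↔ ∃ B, IsMinorModel G H B ∧ ∀ i, B i ⊆ T := by
  refine ⟨fun h => ?_, fun ⟨B, hB, hT⟩ => IsMinorModel.hasMinor_induce hB hT⟩
  obtain ⟨B, hB⟩ := hasMinor_iff_exists_model.1 h
  refine ⟨fun i => Subtype.val '' B i, ⟨fun i j hij => ?_, fun i => ?_, fun i j hij => ?_⟩,
    fun i => Subtype.coe_image_subset T (B i)⟩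
  · exact (Set.disjoint_image_iff Subtype.val_injective).2 (hB.disjoint i j hij)
  · let f : (G.induce T).induce (B i) →g G.induce (Subtype.val '' B i) :=
      ⟨fun x => ⟨x, Set.mem_image_of_mem _ x.2⟩, fun h => h⟩
    refine (hB.connected i).map f ?_
    rintro ⟨_, x, hx, rfl⟩
    exact ⟨⟨x, hx⟩, rfl⟩
  · obtain ⟨x, hx, y, hy, hxy⟩ := hB.exists_adj i j hij
    exact ⟨x, Set.mem_image_of_mem _ hx, y, Set.mem_image_of_mem _ hy, hxy⟩

theorem hasMinor_induce_compl_singleton {r : ℕ} (h : HasMinor G (⊤ : SimpleGraph (Fin (r + 1))))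
    (v : V) : HasMinor (G.induce {v}ᶜ) (⊤ : SimpleGraph (Fin r)) := by
  obtain ⟨B, hB⟩ := hasMinor_iff_exists_model.1 h
  obtain ⟨i, hi⟩ : ∃ i, ∀ j ≠ i, v ∉ B j := by
    by_cases hv : ∃ i, v ∈ B i
    · obtain ⟨i, hi⟩ := hv
      exact ⟨i, fun j hj => Set.disjoint_left.1 (hB.disjoint i j hj.symm) hi⟩
    · exact ⟨0, fun j _ hj => hv ⟨j, hj⟩⟩
  have hinj : Function.Injective i.succAbove := Fin.succAbove_right_injective
  exact IsMinorModel.hasMinor_induce (B := fun j => B (i.succAbove j))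
    ⟨fun _ _ hjk => hB.disjoint _ _ (hinj.ne hjk), fun _ => hB.connected _,
      fun _ _ hjk => hB.exists_adj _ _ (hinj.ne hjk)⟩
    fun j => Set.subset_compl_singleton_iff.2 (hi _ (i.succAbove_ne j))

theorem hasMinor_top_succ_of_induce_neighborSet {v : V} {r : ℕ}
    (h : HasMinor (G.induce (G.neighborSet v)) (⊤ : SimpleGraph (Fin r))) :
    HasMinor G (⊤ : SimpleGraph (Fin (r + 1))) := by
  obtain ⟨B, hB, hBv⟩ := hasMinor_induce_iff.1 h
  have hv (i) : v ∉ B i := fun hi => G.loopless.irrefl v (hBv i hi)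
  have hadj (i) : ∃ x ∈ B i, G.Adj v x :=
    have ⟨x⟩ := (hB.connected i).nonempty
    ⟨x, x.2, hBv i x.2⟩
  refine hasMinor_iff_exists_model.2 ⟨Fin.cons {v} B, ?_, ?_, ?_⟩
  · intro i j
    refine Fin.cases ?_ (fun i => ?_) i <;> refine Fin.cases ?_ (fun j => ?_) j
    · simp
    · simpa using fun _ => hv j
    · simpa using hv i
    · simpa using hB.disjoint i j
  · exact Fin.cases (connected_induce_singleton G v) hB.connected
  · intro i j
    refine Fin.cases ?_ (fun i => ?_) i <;> refine Fin.cases ?_ (fun j => ?_) j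
    · simp
    · simpa using fun _ => hadj j
    · simpa [G.adj_comm _ v] using hadj i
    · simpa using hB.exists_adj i j

/-- Contract `C` into `x`: the new edge from `x` to `y` runs through `C`. -/
theorem hasMinor_induce_sup_edge {C T : Set V} (hC : (G.induce C).Connected) (hCT : Disjoint C T)
    {x y : V} (hx : ∃ a ∈ C, G.Adj x a) (hy : ∃ b ∈ C, G.Adj y b) :
    HasMinor G ((G ⊔ SimpleGraph.edge x y).induce T) := by
  obtain ⟨a, ha, hxa⟩ := hx
  obtain ⟨b, hb, hyb⟩ := hy
  let B : T → Set V := fun t => if t = x then insert x C else {t.1}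
  have B_of_eq {t : T} (ht : t.1 = x) : B t = insert x C := if_pos ht
  have B_of_ne {t : T} (ht : t.1 ≠ x) : B t = {t.1} := if_neg ht
  have mem_B (t : T) : t.1 ∈ B t := by grind
  refine hasMinor_iff_exists_model.2 ⟨B, fun s t hst => ?_, fun t => ?_, ?_⟩
  · rw [Set.disjoint_left]
    grind
  · by_cases ht : t.1 = x
    · exact B_of_eq ht ▸ connected_induce_insert hC ha hxa
    · exact B_of_ne ht ▸ connected_induce_singleton G _
  · rintro s t (hst | hst)
    · exact ⟨s, mem_B s, t, mem_B t, hst⟩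
    · obtain ⟨⟨hs, ht⟩ | ⟨hs, ht⟩, -⟩ := (SimpleGraph.edge_adj ..).1 hst
      · exact ⟨b, B_of_eq hs ▸ Or.inr hb, y, ht ▸ mem_B t, hyb.symm⟩
      · exact ⟨y, hs ▸ mem_B s, b, B_of_eq ht ▸ Or.inr hb, hyb⟩

theorem hasMinor_top_of_isClique_branchSets {r : ℕ} (B : Fin r → Set V) (hne : ∀ i, (B i).Nonempty)
    (hB : ∀ i, G.IsClique (B i)) (hd : ∀ i j, i < j → Disjoint (B i) (B j))
    (hadj : ∀ i j, i < j → ∃ x ∈ B i, ∃ y ∈ B j, G.Adj x y) :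
    HasMinor G (⊤ : SimpleGraph (Fin r)) := by
  refine hasMinor_iff_exists_model.2 ⟨B, fun i j hij => ?_,
    fun i => connected_induce_of_isClique (hB i) (hne i), fun i j hij => ?_⟩
  · rcases lt_or_gt_of_ne hij with h | h
    exacts [hd i j h, (hd j i h).symm]
  · rcases lt_or_gt_of_ne hij with h | h
    · exact hadj i j h
    · obtain ⟨x, hx, y, hy, hxy⟩ := hadj j i h
      exact ⟨y, hy, x, hx, hxy.symm⟩

theorem hasMinor_top_of_not_cliqueFree {r : ℕ} (h : ¬ G.CliqueFree r) :
    HasMinor G (⊤ : SimpleGraph (Fin r)) :=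
  have ⟨f⟩ := SimpleGraph.not_cliqueFree_iff_top_isContained r |>.1 h
  hasMinor_of_injective_hom f.toHom f.injective

theorem hasMinor_top_of_isClique {r : ℕ} {s : Finset V} (hs : G.IsClique s) (hr : r ≤ s.card) :
    HasMinor G (⊤ : SimpleGraph (Fin r)) :=
  hasMinor_top_of_not_cliqueFree fun h => h.mono hr s ⟨hs, rfl⟩

end Minors

/-! ### Small graphs of minimum degree four -/

/-- The octahedron, as the complement of three disjoint edges. -/
def octahedron : SimpleGraph (Fin 6) := (SimpleGraph.fromEdgeSet {s(0, 1), s(2, 3), s(4, 5)})ᶜ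

/-- The pentagonal bipyramid, as the complement of the disjoint union of a pentagon and an edge: the
pentagon is self-complementary, and the ends of the edge become the two apices. -/
def pentagonalBipyramid : SimpleGraph (Fin 7) :=
  (SimpleGraph.fromEdgeSet {s(0, 1), s(1, 2), s(2, 3), s(3, 4), s(4, 0), s(5, 6)})ᶜ

instance : DecidableRel octahedron.Adj := by
  unfold octahedron
  infer_instance

instance : DecidableRel pentagonalBipyramid.Adj := by
  unfold pentagonalBipyramid
  infer_instance

section SmallGraphs

variable {V : Type*} {G : SimpleGraph V}

/-- The branch sets are the pairs `{b.1, b.2}`, with `b.1 = b.2` allowed. -/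
theorem hasMinor_top_of_pairs (L : List (V × V)) (hL : ∀ b ∈ L, b.1 = b.2 ∨ G.Adj b.1 b.2)
    (hd : L.Pairwise fun b c => b.1 ≠ c.1 ∧ b.1 ≠ c.2 ∧ b.2 ≠ c.1 ∧ b.2 ≠ c.2)
    (hadj : L.Pairwise fun b c =>
      G.Adj b.1 c.1 ∨ G.Adj b.1 c.2 ∨ G.Adj b.2 c.1 ∨ G.Adj b.2 c.2) :
    HasMinor G (⊤ : SimpleGraph (Fin L.length)) := by
  rw [List.pairwise_iff_get] at hd hadj
  refine hasMinor_top_of_isClique_branchSets (fun i => {(L.get i).1, (L.get i).2})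
    (fun i => Set.insert_nonempty _ _) (fun i => ?_) (fun i j hij => ?_) fun i j hij => ?_
  · rw [SimpleGraph.isClique_pair]
    exact (hL _ (L.get_mem i)).resolve_left
  · have := hd i j hij
    rw [Set.disjoint_left]
    grind
  · simpa [or_and_right, exists_or, or_assoc] using hadj i j hij

theorem hasMinor_top_of_star [Fintype V] {r : ℕ} (hcard : r < Fintype.card V) (a : V)
    (ha : ∀ x y, x ≠ a → y ≠ a → x ≠ y → G.Adj x y) : HasMinor G (⊤ : SimpleGraph (Fin r)) := by
  refine hasMinor_top_of_isClique (s := Finset.univ.erase a) (fun x hx y hy => ?_) ?_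
  · exact ha x y (Finset.ne_of_mem_erase hx) (Finset.ne_of_mem_erase hy)
  · rw [Finset.card_erase_of_mem (Finset.mem_univ a), Finset.card_univ]
    omega

/-- Contract two disjoint edges of `K₃,₄` avoiding the extra edge `pq`. -/
theorem hasMinor_K5_of_completeBetween {S T : Finset V} (hS : 3 ≤ S.card) (hT : 4 ≤ T.card)
    (hST : ∀ x ∈ S, ∀ y ∈ T, G.Adj x y) {p q : V} (hp : p ∈ T) (hq : q ∈ T) (hpq : G.Adj p q) :
    HasMinor G (⊤ : SimpleGraph (Fin 5)) := by
  obtain ⟨S', hS', hS'3⟩ := Finset.exists_subset_card_eq hS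
  obtain ⟨e, f, g, hef, heg, hfg, rfl⟩ := Finset.card_eq_three.1 hS'3
  obtain ⟨r, hr, hr'⟩ : ∃ r ∈ T, r ∉ ({p, q} : Finset V) :=
    Finset.exists_mem_notMem_of_card_lt_card (Finset.card_le_two.trans_lt (by omega))
  obtain ⟨s, hs, hs'⟩ : ∃ s ∈ T, s ∉ ({p, q, r} : Finset V) :=
    Finset.exists_mem_notMem_of_card_lt_card (Finset.card_le_three.trans_lt (by omega))
  have he : e ∈ S := hS' (by simp)
  have hf : f ∈ S := hS' (by simp)
  have hg : g ∈ S := hS' (by simp)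
  have hne : ∀ x ∈ S, ∀ y ∈ T, x ≠ y := fun x hx y hy => (hST x hx y hy).ne
  have hsymm : ∀ x y, G.Adj x y → G.Adj y x := fun _ _ h => h.symm
  have hpq' := hpq.ne
  apply hasMinor_top_of_pairs [(p, p), (q, q), (e, r), (f, s), (g, g)] <;> grind

theorem nonempty_iso_of_nodup [Fintype V] {n : ℕ} {P : SimpleGraph (Fin n)}
    (hcard : Fintype.card V = n) {f : Fin n → V} (hf : (List.ofFn f).Nodup)
    (hadj : ∀ i j, G.Adj (f i) (f j) ↔ P.Adj i j) : Nonempty (G ≃g P) :=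
  have hbij := (Fintype.bijective_iff_injective_and_card f).2
    ⟨List.nodup_ofFn.1 hf, by rw [hcard, Fintype.card_fin]⟩
  ⟨(RelIso.mk (Equiv.ofBijective f hbij) (hadj _ _)).symm⟩

theorem ncard_commonNeighbors_iso {W : Type*} {P : SimpleGraph W} (e : G ≃g P) (x y : V) :
    (P.commonNeighbors (e x) (e y)).ncard = (G.commonNeighbors x y).ncard := by
  rw [← Set.ncard_preimage_of_injective_subset_range e.injective (by simp)]
  congr 1
  ext
  simp [SimpleGraph.mem_commonNeighbors, e.map_adj_iff]

theorem cliqueFree_four_of_forall (h : ∀ a b, G.Adj a b → ∀ c, G.Adj a c → G.Adj b c →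
    ∀ d, G.Adj a d → G.Adj b d → ¬ G.Adj c d) : G.CliqueFree 4 := by
  by_contra hG
  obtain ⟨f⟩ := SimpleGraph.not_cliqueFree_iff_top_isContained 4 |>.1 hG
  have hf {i j : Fin 4} (hij : i ≠ j) : G.Adj (f i) (f j) := f.toHom.map_adj hij
  exact h (f 0) (f 1) (hf (by decide)) (f 2) (hf (by decide)) (hf (by decide)) (f 3)
    (hf (by decide)) (hf (by decide)) (hf (by decide))

variable [Fintype V]

theorem adj_of_degree_compl_le_one {x y z : V} (hx : Gᶜ.degree x ≤ 1) (hy : Gᶜ.Adj x y)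
    (hzx : z ≠ x) (hzy : z ≠ y) : G.Adj x z := by
  by_contra hz
  refine hzy (Finset.card_le_one.1 hx z ?_ y ((SimpleGraph.mem_neighborFinset ..).2 hy))
  exact (SimpleGraph.mem_neighborFinset ..).2 ((G.compl_adj x z).2 ⟨hzx.symm, hz⟩)

theorem adj_of_degree_compl_le_two {x a b z : V} (hx : Gᶜ.degree x ≤ 2) (ha : Gᶜ.Adj x a)
    (hb : Gᶜ.Adj x b) (hab : a ≠ b) (hzx : z ≠ x) (hza : z ≠ a) (hzb : z ≠ b) : G.Adj x z := by
  by_contra hz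
  have hsub : {z, a, b} ⊆ Gᶜ.neighborFinset x := by
    grind [SimpleGraph.mem_neighborFinset, SimpleGraph.compl_adj]
  have := Finset.card_le_card hsub
  rw [SimpleGraph.card_neighborFinset_eq_degree,
    Finset.card_eq_three.2 ⟨z, a, b, hza, hzb, hab, rfl⟩] at this
  omega

theorem exists_notMem_of_card_lt {s : Finset V} (hs : s.card < Fintype.card V) : ∃ x, x ∉ s :=
  have ⟨x, _, hx⟩ := Finset.exists_mem_notMem_of_card_lt_card (hs.trans_eq Finset.card_univ.symm)
  ⟨x, hx⟩

theorem exists_disjoint_nonadj {r : ℕ} (hcard : r < Fintype.card V)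
    (hG : ¬ HasMinor G (⊤ : SimpleGraph (Fin r))) (a : V) :
    ∃ c d, Gᶜ.Adj c d ∧ c ≠ a ∧ d ≠ a := by
  by_contra! h
  refine hG (hasMinor_top_of_star hcard a fun x y hx hy hxy => ?_)
  by_contra hxy'
  exact hy (h x y ((G.compl_adj x y).2 ⟨hxy, hxy'⟩) hx)

theorem nonempty_iso_octahedron (hcard : Fintype.card V = 6)
    (hdeg : ∀ x, Gᶜ.degree x ≤ 1) (hG : ¬ HasMinor G (⊤ : SimpleGraph (Fin 5))) :
    Nonempty (G ≃g octahedron) := by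
  have : Nonempty V := Fintype.card_pos_iff.1 (by omega)
  obtain ⟨a, b, hab, -⟩ := exists_disjoint_nonadj (r := 5) (by omega) hG (Classical.arbitrary V)
  obtain ⟨c, d, hcd, hca, hda⟩ := exists_disjoint_nonadj (by omega) hG a
  have ha {z} := adj_of_degree_compl_le_one (z := z) (hdeg a) hab
  have hb {z} := adj_of_degree_compl_le_one (z := z) (hdeg b) hab.symm
  have hc {z} := adj_of_degree_compl_le_one (z := z) (hdeg c) hcd
  have hd {z} := adj_of_degree_compl_le_one (z := z) (hdeg d) hcd.symm
  rw [SimpleGraph.compl_adj] at hab hcd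
  have hcb : c ≠ b := by grind [G.adj_comm c d]
  have hdb : d ≠ b := by grind [G.adj_comm c d]
  obtain ⟨e, he⟩ := exists_notMem_of_card_lt (s := {a, b, c, d})
    (Finset.card_le_four.trans_lt (by omega))
  obtain ⟨f, hf⟩ := exists_notMem_of_card_lt (s := {a, b, c, d, e})
    (Finset.card_le_five.trans_lt (by omega))
  have hsymm := G.adj_comm
  have hef : ¬ G.Adj e f := fun hef => hG <| by
    apply hasMinor_top_of_pairs [(a, c), (b, b), (d, d), (e, e), (f, f)] <;> grind
  refine nonempty_iso_of_nodup (f := ![a, b, c, d, e, f]) hcard ?_ fun i j => ?_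
  · simp only [List.ofFn_succ, List.ofFn_zero, Matrix.cons_val_zero, Matrix.cons_val_succ]
    grind
  · fin_cases i, j <;>
      (first | refine iff_of_true ?_ (by decide) | refine iff_of_false ?_ (by decide)) <;>
      simp only [Fin.zero_eta, Fin.mk_one, Fin.reduceFinMk, Matrix.cons_val] <;>
      grind [SimpleGraph.irrefl]

theorem nonempty_iso_bipyramid_of_path (hcard : Fintype.card V = 7)
    (hdeg : ∀ x, Gᶜ.degree x ≤ 2) (hG : ¬ HasMinor G (⊤ : SimpleGraph (Fin 5)))
    {a b c d e : V} (hnodup : [a, b, c, d, e].Nodup) (hab : Gᶜ.Adj a b) (hbc : Gᶜ.Adj b c)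
    (hcd : Gᶜ.Adj c d) (hde : Gᶜ.Adj d e) :
    Nonempty (G ≃g pentagonalBipyramid) := by
  have hb {z} := adj_of_degree_compl_le_two (z := z) (hdeg b) hab.symm hbc (by grind)
  have hc {z} := adj_of_degree_compl_le_two (z := z) (hdeg c) hbc.symm hcd (by grind)
  have hd {z} := adj_of_degree_compl_le_two (z := z) (hdeg d) hcd.symm hde (by grind)
  have h5 : ({a, b, c, d, e} : Finset V).card < Fintype.card V :=
    Finset.card_le_five.trans_lt (by omega)
  obtain ⟨x, hx⟩ := exists_notMem_of_card_lt h5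
  obtain ⟨y, hy⟩ := exists_notMem_of_card_lt (s := {a, b, c, d, e, x})
    (Finset.card_le_six.trans_lt (by omega))
  have hay : G.Adj a x ∨ G.Adj a y := by
    by_contra! h
    exact h.2 (adj_of_degree_compl_le_two (hdeg a) hab ((G.compl_adj a x).2 ⟨by grind, h.1⟩)
      (by grind) (by grind) (by grind) (by grind))
  have hsymm := G.adj_comm
  have hae : ¬ G.Adj a e := fun hae => hG <| by
    by_cases hx' : G.Adj a x ∨ G.Adj e x
    · apply hasMinor_top_of_pairs [(a, e), (c, y), (b, b), (d, d), (x, x)] <;> grind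
    · apply hasMinor_top_of_pairs [(a, e), (c, x), (b, b), (d, d), (y, y)] <;> grind
  have hea : Gᶜ.Adj e a := (G.compl_adj e a).2 ⟨by grind, fun h => hae h.symm⟩
  have ha {z} := adj_of_degree_compl_le_two (z := z) (hdeg a) hab hea.symm (by grind)
  have he {z} := adj_of_degree_compl_le_two (z := z) (hdeg e) hde.symm hea (by grind)
  have hxy : ¬ G.Adj x y := fun hxy => hG <| by
    apply hasMinor_top_of_pairs [(b, d), (c, e), (a, a), (x, x), (y, y)] <;> grind
  refine nonempty_iso_of_nodup (f := ![a, b, c, d, e, x, y]) hcard ?_ fun i j => ?_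
  · simp only [List.ofFn_succ, List.ofFn_zero, Matrix.cons_val_zero, Matrix.cons_val_succ]
    grind
  · rw [SimpleGraph.compl_adj] at hab hbc hcd hde hea
    fin_cases i, j <;>
      (first | refine iff_of_true ?_ (by decide) | refine iff_of_false ?_ (by decide)) <;>
      simp only [Fin.zero_eta, Fin.mk_one, Fin.reduceFinMk, Matrix.cons_val] <;>
      grind [SimpleGraph.irrefl]

theorem hasMinor_K5_of_compl_closed {S : Finset V} (hS : 3 ≤ S.card) (hS' : 4 ≤ Sᶜ.card)
    (hclosed : ∀ x ∈ S, ∀ y, Gᶜ.Adj x y → y ∈ S) {p q : V} (hp : p ∉ S) (hq : q ∉ S)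
    (hpq : G.Adj p q) : HasMinor G (⊤ : SimpleGraph (Fin 5)) := by
  refine hasMinor_K5_of_completeBetween hS hS' (fun x hx y hy => ?_) (Finset.mem_compl.2 hp)
    (Finset.mem_compl.2 hq) hpq
  rw [Finset.mem_compl] at hy
  by_contra hxy
  exact hy (hclosed x hx y ((G.compl_adj x y).2 ⟨fun h => hy (h ▸ hx), hxy⟩))

theorem hasMinor_K5_of_compl_closed_four (hcard : Fintype.card V = 7) {a b c d : V}
    (hnodup : [a, b, c, d].Nodup)
    (hclosed : ∀ x ∈ [a, b, c, d], ∀ y, Gᶜ.Adj x y → y ∈ [a, b, c, d]) (hac : G.Adj a c) :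
    HasMinor G (⊤ : SimpleGraph (Fin 5)) := by
  have hcard4 : ({a, b, c, d} : Finset V).card = 4 := by
    simpa using List.toFinset_card_of_nodup hnodup
  refine hasMinor_K5_of_compl_closed (S := {a, b, c, d}ᶜ) ?_ ?_ (fun x hx y hxy => ?_)
    (by simp) (by simp) hac
  · rw [Finset.card_compl]
    omega
  · rw [compl_compl, hcard4]
  · rw [Finset.mem_compl] at hx ⊢
    exact fun hy => hx (by simpa using hclosed y (by simpa using hy) x hxy.symm)

theorem nonempty_iso_bipyramid_of_path_four (hcard : Fintype.card V = 7)
    (hdeg : ∀ x, Gᶜ.degree x ≤ 2) (hG : ¬ HasMinor G (⊤ : SimpleGraph (Fin 5)))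
    {a b c d : V} (hnodup : [a, b, c, d].Nodup) (hab : Gᶜ.Adj a b) (hbc : Gᶜ.Adj b c)
    (hcd : Gᶜ.Adj c d) : Nonempty (G ≃g pentagonalBipyramid) := by
  have hb {z} := adj_of_degree_compl_le_two (z := z) (hdeg b) hab.symm hbc (by grind)
  have hc {z} := adj_of_degree_compl_le_two (z := z) (hdeg c) hbc.symm hcd (by grind)
  by_cases ha : ∃ e, Gᶜ.Adj e a ∧ e ∉ [b, c, d]
  · obtain ⟨e, hea, he⟩ := ha
    exact nonempty_iso_bipyramid_of_path hcard hdeg hG (by grind [hea.ne]) hea hab hbc hcd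
  by_cases hd : ∃ e, Gᶜ.Adj d e ∧ e ∉ [a, b, c]
  · obtain ⟨e, hde, he⟩ := hd
    exact nonempty_iso_bipyramid_of_path hcard hdeg hG (by grind [hde.ne]) hab hbc hcd hde
  refine absurd (hasMinor_K5_of_compl_closed_four hcard hnodup ?_ ?_) hG
  · grind [SimpleGraph.compl_adj, Gᶜ.adj_comm]
  · exact (hc (by grind) (by grind) (by grind)).symm

theorem nonempty_iso_bipyramid_of_path_three (hcard : Fintype.card V = 7)
    (hdeg : ∀ x, Gᶜ.degree x ≤ 2) (hG : ¬ HasMinor G (⊤ : SimpleGraph (Fin 5)))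
    {a b c : V} (hab : Gᶜ.Adj a b) (hbc : Gᶜ.Adj b c) (hac : a ≠ c) :
    Nonempty (G ≃g pentagonalBipyramid) := by
  have hb {z} := adj_of_degree_compl_le_two (z := z) (hdeg b) hab.symm hbc hac
  by_cases ha : ∃ d, Gᶜ.Adj d a ∧ d ∉ [b, c]
  · obtain ⟨d, hda, hd⟩ := ha
    exact nonempty_iso_bipyramid_of_path_four hcard hdeg hG
      (by grind [hda.ne, hab.ne, hbc.ne]) hda hab hbc
  by_cases hc : ∃ d, Gᶜ.Adj c d ∧ d ∉ [a, b]
  · obtain ⟨d, hcd, hd⟩ := hc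
    exact nonempty_iso_bipyramid_of_path_four hcard hdeg hG
      (by grind [hcd.ne, hab.ne, hbc.ne]) hab hbc hcd
  have hS := Finset.card_eq_three.2 ⟨a, b, c, hab.ne, hac, hbc.ne, rfl⟩
  have hS' : ({a, b, c}ᶜ : Finset V).card = 4 := by
    rw [Finset.card_compl]
    omega
  obtain ⟨p, hp⟩ := Finset.card_pos.1 (hS'.trans_gt four_pos)
  obtain ⟨q, hq, hpq⟩ : ∃ q ∈ ({a, b, c}ᶜ : Finset V), q ∉ insert p (Gᶜ.neighborFinset p) := by
    refine Finset.exists_mem_notMem_of_card_lt_card ((Finset.card_insert_le _ _).trans_lt ?_)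
    have := hdeg p
    rw [SimpleGraph.card_neighborFinset_eq_degree]
    omega
  refine absurd (hasMinor_K5_of_compl_closed hS.ge hS'.ge ?_ (Finset.mem_compl.1 hp)
    (Finset.mem_compl.1 hq) ?_) hG
  · grind [SimpleGraph.compl_adj, Gᶜ.adj_comm]
  · grind [SimpleGraph.compl_adj, SimpleGraph.mem_neighborFinset]

theorem nonempty_iso_bipyramid (hcard : Fintype.card V = 7)
    (hdeg : ∀ x, Gᶜ.degree x ≤ 2) (hG : ¬ HasMinor G (⊤ : SimpleGraph (Fin 5))) :
    Nonempty (G ≃g pentagonalBipyramid) := by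
  by_cases hpath : ∃ a b c, Gᶜ.Adj a b ∧ Gᶜ.Adj b c ∧ a ≠ c
  · obtain ⟨a, b, c, hab, hbc, hac⟩ := hpath
    exact nonempty_iso_bipyramid_of_path_three hcard hdeg hG hab hbc hac
  push Not at hpath
  have : Nonempty V := Fintype.card_pos_iff.1 (by omega)
  obtain ⟨a, b, hab, -⟩ := exists_disjoint_nonadj (r := 5) (by omega) hG (Classical.arbitrary V)
  obtain ⟨c, d, hcd, hca, hda⟩ := exists_disjoint_nonadj (by omega) hG a
  have hcb : c ≠ b := fun h => hda.symm (hpath a b d hab (h ▸ hcd))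
  have hdb : d ≠ b := fun h => hca.symm (hpath a b c hab (h ▸ hcd.symm))
  refine absurd (hasMinor_K5_of_compl_closed_four (a := a) (b := b) (c := c) (d := d) hcard
    (by grind [hab.ne, hcd.ne]) ?_ ?_) hG
  · grind [Gᶜ.adj_comm]
  · by_contra hac
    exact hcb (hpath c a b ((G.compl_adj c a).2 ⟨hca, fun h => hac h.symm⟩) hab)

theorem nonempty_iso_of_four_le_degree (h5 : 5 ≤ Fintype.card V) (h7 : Fintype.card V ≤ 7)
    (hdeg : ∀ x, 4 ≤ G.degree x) (hG : ¬ HasMinor G (⊤ : SimpleGraph (Fin 5))) :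
    Nonempty (G ≃g octahedron) ∨ Nonempty (G ≃g pentagonalBipyramid) := by
  have hdeg' (x) : Gᶜ.degree x ≤ Fintype.card V - 5 := by
    have := hdeg x
    rw [SimpleGraph.degree_compl]
    omega
  obtain hcard | hcard | hcard : Fintype.card V = 5 ∨ Fintype.card V = 6 ∨ Fintype.card V = 7 := by
    omega
  · refine absurd (hasMinor_top_of_isClique (s := Finset.univ) (fun x _ y _ hxy => ?_) hcard.ge) hG
    by_contra hadj
    have := (Gᶜ.degree_pos_iff_exists_adj x).2 ⟨y, (G.compl_adj x y).2 ⟨hxy, hadj⟩⟩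
    have := hdeg' x
    omega
  · exact .inl (nonempty_iso_octahedron hcard (by simpa [hcard] using hdeg') hG)
  · exact .inr (nonempty_iso_bipyramid hcard (by simpa [hcard] using hdeg') hG)

theorem six_le_card_of_four_le_degree (h5 : 5 ≤ Fintype.card V) (h7 : Fintype.card V ≤ 7)
    (hdeg : ∀ x, 4 ≤ G.degree x) (hG : ¬ HasMinor G (⊤ : SimpleGraph (Fin 5))) :
    6 ≤ Fintype.card V := by
  rcases nonempty_iso_of_four_le_degree h5 h7 hdeg hG with ⟨⟨e⟩⟩ | ⟨⟨e⟩⟩ <;> simp [e.card_eq]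

theorem cliqueFree_four_of_four_le_degree (h5 : 5 ≤ Fintype.card V) (h7 : Fintype.card V ≤ 7)
    (hdeg : ∀ x, 4 ≤ G.degree x) (hG : ¬ HasMinor G (⊤ : SimpleGraph (Fin 5))) :
    G.CliqueFree 4 := by
  rcases nonempty_iso_of_four_le_degree h5 h7 hdeg hG with ⟨⟨e⟩⟩ | ⟨⟨e⟩⟩
  · exact SimpleGraph.CliqueFree.comap e.isContained (cliqueFree_four_of_forall (by decide))
  · exact SimpleGraph.CliqueFree.comap e.isContained (cliqueFree_four_of_forall (by decide))

theorem ncard_commonNeighbors_le_two_of_four_le_degree (h5 : 5 ≤ Fintype.card V)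
    (h7 : Fintype.card V ≤ 7) (hdeg : ∀ x, 4 ≤ G.degree x)
    (hG : ¬ HasMinor G (⊤ : SimpleGraph (Fin 5))) {x y : V}
    (hxy : G.Adj x y) : (G.commonNeighbors x y).ncard ≤ 2 := by
  rcases nonempty_iso_of_four_le_degree h5 h7 hdeg hG with ⟨⟨e⟩⟩ | ⟨⟨e⟩⟩
  all_goals
    rw [← ncard_commonNeighbors_iso e, Set.ncard_eq_toFinset_card']
    have := e.map_adj_iff.2 hxy
    generalize e x = i, e y = j at *
    revert i j
  · decide
  · decide

theorem eq_of_le_of_four_le_degree {H : SimpleGraph V} (hGH : G ≤ H) (h5 : 5 ≤ Fintype.card V)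
    (h7 : Fintype.card V ≤ 7) (hdeg : ∀ x, 4 ≤ G.degree x)
    (hH : ¬ HasMinor H (⊤ : SimpleGraph (Fin 5))) : G = H := by
  have hG : ¬ HasMinor G (⊤ : SimpleGraph (Fin 5)) := fun h => hH ((hasMinor_of_le hGH).trans h)
  have hdegH (x) : 4 ≤ H.degree x := (hdeg x).trans (SimpleGraph.degree_le_of_le hGH)
  suffices G.edgeFinset.card = H.edgeFinset.card from SimpleGraph.edgeFinset_inj.1
    (Finset.eq_of_subset_of_card_le (SimpleGraph.edgeFinset_mono hGH) this.ge)
  rcases nonempty_iso_of_four_le_degree h5 h7 hdeg hG with ⟨⟨e⟩⟩ | ⟨⟨e⟩⟩ <;>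
  rcases nonempty_iso_of_four_le_degree h5 h7 hdegH hH with ⟨⟨e'⟩⟩ | ⟨⟨e'⟩⟩
  · exact e.card_edgeFinset_eq.trans e'.card_edgeFinset_eq.symm
  · simpa using e.card_eq.symm.trans e'.card_eq
  · simpa using e.card_eq.symm.trans e'.card_eq
  · exact e.card_edgeFinset_eq.trans e'.card_edgeFinset_eq.symm

theorem hasMinor_sup_edge_of_four_le_degree (h5 : 5 ≤ Fintype.card V) (h7 : Fintype.card V ≤ 7)
    (hdeg : ∀ x, 4 ≤ G.degree x) {x y : V} (hne : x ≠ y) (hxy : ¬ G.Adj x y) :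
    HasMinor (G ⊔ SimpleGraph.edge x y) (⊤ : SimpleGraph (Fin 5)) := by
  by_contra hG
  have heq := eq_of_le_of_four_le_degree le_sup_left h5 h7 hdeg hG
  exact hxy (heq ▸ Or.inr ((SimpleGraph.edge_adj ..).2 ⟨.inl ⟨rfl, rfl⟩, hne⟩))

end SmallGraphs

/-! ### Light vertices -/

section Link

variable {V : Type*} {G : SimpleGraph V} {v x y : V}

/-- The vertex `v` is *light*: it has at most seven neighbours, and each edge at `v` lies in at
least four triangles. In a graph without `K₆` minor the neighbourhood of such a vertex induces an
octahedron or a pentagonal bipyramid. -/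
structure IsLight (G : SimpleGraph V) (v : V) : Prop where
  nonempty : (G.neighborSet v).Nonempty
  ncard_le : (G.neighborSet v).ncard ≤ 7
  four_le : ∀ x, G.Adj v x → 4 ≤ (G.commonNeighbors v x).ncard

theorem ncard_commonNeighbors_induce {T : Set V} (x y : T) :
    ((G.induce T).commonNeighbors x y).ncard = (T ∩ G.commonNeighbors x y).ncard := by
  rw [← Set.ncard_image_of_injective _ Subtype.val_injective]
  exact congrArg Set.ncard (Subtype.image_preimage_coe T (G.commonNeighbors x y))

theorem degree_induce_neighborSet [Fintype V] (x : G.neighborSet v) :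
    (G.induce (G.neighborSet v)).degree x = (G.commonNeighbors v x).ncard := by
  rw [← SimpleGraph.card_neighborSet_eq_degree, ← Nat.card_eq_fintype_card, Nat.card_coe_set_eq,
    ← Set.ncard_image_of_injective _ Subtype.val_injective]
  exact congrArg Set.ncard (Subtype.image_preimage_coe (G.neighborSet v) (G.neighborSet x))

namespace IsLight

variable (hv : IsLight G v)
include hv

theorem four_le_degree [Fintype V] (x : G.neighborSet v) :
    4 ≤ (G.induce (G.neighborSet v)).degree x :=
  (hv.four_le x x.2).trans_eq (degree_induce_neighborSet x).symm

theorem card_le_seven [Fintype V] : Fintype.card (G.neighborSet v) ≤ 7 := by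
  rw [← Nat.card_eq_fintype_card, Nat.card_coe_set_eq]
  exact hv.ncard_le

theorem five_le_card [Fintype V] : 5 ≤ Fintype.card (G.neighborSet v) := by
  obtain ⟨x, hx⟩ := hv.nonempty
  exact (hv.four_le_degree ⟨x, hx⟩).trans_lt (SimpleGraph.degree_lt_card_verts _)

theorem hasMinor_sup_edge [Finite V] (hx : G.Adj v x) (hy : G.Adj v y) (hne : x ≠ y)
    (hxy : ¬ G.Adj x y) :
    HasMinor ((G ⊔ SimpleGraph.edge x y).induce (insert v (G.neighborSet v)))
      (⊤ : SimpleGraph (Fin 6)) := by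
  have := Fintype.ofFinite V
  refine hasMinor_top_succ_of_induce_neighborSet (v := ⟨v, Set.mem_insert _ _⟩) ?_
  let x' : G.neighborSet v := ⟨x, hx⟩
  let y' : G.neighborSet v := ⟨y, hy⟩
  refine HasMinor.trans ?_ (hasMinor_sup_edge_of_four_le_degree hv.five_le_card hv.card_le_seven
    hv.four_le_degree (x := x') (y := y') (fun h => hne (congrArg Subtype.val h)) hxy)
  refine hasMinor_of_injective_hom ⟨fun z => ⟨⟨z, .inr z.2⟩, .inl z.2⟩, fun {a b} hab => ?_⟩
    fun a b hab => Subtype.ext (congrArg (fun z => z.1.1) hab)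
  refine hab.imp id fun h => ?_
  simp only [SimpleGraph.edge_adj, Subtype.ext_iff, x', y'] at h
  exact (SimpleGraph.edge_adj ..).2 ⟨h.1, fun h' => h.2 (Subtype.ext h')⟩

variable (hG : ¬ HasMinor G (⊤ : SimpleGraph (Fin 6)))
include hG

theorem six_le_ncard [Finite V] : 6 ≤ (G.neighborSet v).ncard := by
  have := Fintype.ofFinite V
  rw [← Nat.card_coe_set_eq, Nat.card_eq_fintype_card]
  exact six_le_card_of_four_le_degree hv.five_le_card hv.card_le_seven hv.four_le_degree
    (mt hasMinor_top_succ_of_induce_neighborSet hG)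

theorem ncard_le_three_of_isClique [Finite V] {s : Set V} (hs : G.IsClique s)
    (hsv : s ⊆ G.neighborSet v) : s.ncard ≤ 3 := by
  have := Fintype.ofFinite V
  have hfree := cliqueFree_four_of_four_le_degree hv.five_le_card hv.card_le_seven hv.four_le_degree
    (mt hasMinor_top_succ_of_induce_neighborSet hG)
  let t : Set (G.neighborSet v) := Subtype.val ⁻¹' s
  have ht : t.ncard = s.ncard :=
    Set.ncard_preimage_of_injective_subset_range Subtype.val_injective (by simpa)
  rw [← ht, Set.ncard_eq_toFinset_card']
  by_contra! h
  refine hfree.mono h t.toFinset ⟨?_, rfl⟩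
  rw [Set.coe_toFinset]
  exact fun a ha b hb hab => hs ha hb (Subtype.coe_injective.ne hab)

theorem ncard_commonNeighbors_le_two [Finite V] (hx : G.Adj v x) (hy : G.Adj v y)
    (hxy : G.Adj x y) : (G.neighborSet v ∩ G.commonNeighbors x y).ncard ≤ 2 := by
  have := Fintype.ofFinite V
  have := ncard_commonNeighbors_le_two_of_four_le_degree hv.five_le_card hv.card_le_seven
    hv.four_le_degree (mt hasMinor_top_succ_of_induce_neighborSet hG) (x := ⟨x, hx⟩) (y := ⟨y, hy⟩)
    hxy
  rwa [ncard_commonNeighbors_induce] at this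

theorem isClique_attachments [Finite V] {C : Set V} (hC : (G.induce C).Connected)
    (hCv : Disjoint C (insert v (G.neighborSet v))) :
    G.IsClique {x | G.Adj v x ∧ ∃ a ∈ C, G.Adj x a} := by
  rintro x ⟨hx, hxC⟩ y ⟨hy, hyC⟩ hxy
  by_contra hadj
  exact hG ((hasMinor_induce_sup_edge hC hCv hxC hyC).trans (hv.hasMinor_sup_edge hx hy hxy hadj))

end IsLight

end Link

section Components

variable {V : Type*} [Finite V] {G : SimpleGraph V}

theorem exists_connected_closed (G : SimpleGraph V) {U : Set V} {z : V} (hz : z ∈ U) :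
    ∃ C ⊆ U, z ∈ C ∧ (G.induce C).Connected ∧ ∀ a ∈ C, ∀ b ∈ U, G.Adj a b → b ∈ C := by
  obtain ⟨C, hzC, hC⟩ := (Set.toFinite {C | C ⊆ U ∧ (G.induce C).Connected}).exists_le_maximal
    (a := {z}) ⟨by simpa, connected_induce_singleton G z⟩
  refine ⟨C, hC.prop.1, hzC rfl, hC.prop.2, fun a ha b hb hab => ?_⟩
  refine hC.le_of_ge ⟨Set.insert_subset hb hC.prop.1, ?_⟩ (Set.subset_insert b C) (.inl rfl)
  exact connected_induce_insert hC.prop.2 ha hab.symm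

end Components

section ThinEdges

variable {V : Type*} {G : SimpleGraph V} {K : Set V} {v : V}

/-- For every clique `K` on at most three vertices, `G` has an edge not inside `K` that lies in at
most three triangles, unless all edges of `G` are inside `K`. Allowing `K` makes the property
inductive: `K` will separate the part of the graph to which it is applied from the rest. -/
def HasThinEdges (G : SimpleGraph V) : Prop :=
  ∀ K : Set V, G.IsClique K → K.ncard ≤ 3 → (∃ x y, G.Adj x y ∧ ¬ (x ∈ K ∧ y ∈ K)) →
    ∃ x y, G.Adj x y ∧ ¬ (x ∈ K ∧ y ∈ K) ∧ (G.commonNeighbors x y).ncard ≤ 3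

/-- `K` is a clique on at most three vertices, and all edges not inside `K` lie in at least four
triangles: a violation of `HasThinEdges`. -/
structure IsThickOutside (G : SimpleGraph V) (K : Set V) : Prop where
  isClique : G.IsClique K
  ncard_le : K.ncard ≤ 3
  four_le : ∀ x y, G.Adj x y → ¬ (x ∈ K ∧ y ∈ K) → 4 ≤ (G.commonNeighbors x y).ncard

theorem HasThinEdges.exists_of_induce {T : Set V} (h : HasThinEdges (G.induce T))
    (hK : G.IsClique K) (hKT : K ⊆ T) (hK3 : K.ncard ≤ 3) {x y : V} (hx : x ∈ T) (hy : y ∈ T)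
    (hxy : G.Adj x y) (hxyK : ¬ (x ∈ K ∧ y ∈ K)) :
    ∃ a ∈ T, ∃ b ∈ T, G.Adj a b ∧ ¬ (a ∈ K ∧ b ∈ K) ∧ (T ∩ G.commonNeighbors a b).ncard ≤ 3 := by
  obtain ⟨a, b, hab, habK, hle⟩ := h (Subtype.val ⁻¹' K)
    (fun a ha b hb hab => hK ha hb (Subtype.coe_injective.ne hab))
    (by rwa [Set.ncard_preimage_of_injective_subset_range Subtype.val_injective
      (hKT.trans_eq Subtype.range_coe.symm)]) ⟨⟨x, hx⟩, ⟨y, hy⟩, hxy, hxyK⟩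
  exact ⟨a, a.2, b, b.2, hab, habK, (ncard_commonNeighbors_induce a b).ge.trans hle⟩

namespace IsThickOutside

variable (hK : IsThickOutside G K)
include hK

theorem isLight (hvK : v ∉ K) (hne : (G.neighborSet v).Nonempty)
    (h7 : (G.neighborSet v).ncard ≤ 7) : IsLight G v :=
  ⟨hne, h7, fun x hx => hK.four_le v x hx fun h => hvK h.1⟩

variable [Finite V] (hG : ¬ HasMinor G (⊤ : SimpleGraph (Fin 6)))
  (hthin : ∀ T : Set V, T ≠ Set.univ → HasThinEdges (G.induce T))
include hG

include hthin in
/-- If `C` avoids `K`, then `C` together with its attachments in the neighbourhood of `v` is a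
smaller graph violating `HasThinEdges`. -/
theorem not_disjoint_of_closed (hv : IsLight G v) {C : Set V} (hC : (G.induce C).Connected)
    (hCv : Disjoint C (insert v (G.neighborSet v)))
    (hclosed : ∀ a ∈ C, ∀ b, b ∉ insert v (G.neighborSet v) → G.Adj a b → b ∈ C)
    {z w : V} (hz : z ∈ C) (hzw : G.Adj z w) : ¬ Disjoint C K := by
  intro hCK
  let A : Set V := {x | G.Adj v x ∧ ∃ a ∈ C, G.Adj x a}
  have hA : G.IsClique A := hv.isClique_attachments hG hC hCv
  have hnbr {a b : V} (ha : a ∈ C) (hab : G.Adj a b) : b ∈ C ∪ A := by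
    by_cases hb : b ∈ insert v (G.neighborSet v)
    · obtain rfl | hb := hb
      · exact absurd (Or.inr hab.symm) (Set.disjoint_left.1 hCv ha)
      · exact .inr ⟨hb, a, ha, hab.symm⟩
    · exact .inl (hclosed a ha b hb hab)
  have hCA {a : V} (ha : a ∈ C) : a ∉ A := fun h => Set.disjoint_left.1 hCv ha (.inr h.1)
  have hvT : v ∉ C ∪ A := by
    rintro (h | h)
    · exact Set.disjoint_left.1 hCv h (.inl rfl)
    · exact G.irrefl h.1
  have hne : C ∪ A ≠ Set.univ := fun h => hvT (h ▸ Set.mem_univ v)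
  obtain ⟨x, hx, y, hy, hxy, hxyA, hle⟩ := (hthin _ hne).exists_of_induce hA Set.subset_union_right
    (hv.ncard_le_three_of_isClique hG hA fun x hx => hx.1) (.inl hz) (hnbr hz hzw) hzw
    fun h => hCA hz h.1
  have hxyC : x ∈ C ∨ y ∈ C := by
    by_contra! h
    exact hxyA ⟨hx.resolve_left h.1, hy.resolve_left h.2⟩
  have hsub : G.commonNeighbors x y ⊆ C ∪ A := by
    rcases hxyC with hx | hy
    · exact fun b hb => hnbr hx hb.1
    · exact fun b hb => hnbr hy hb.2
  rw [Set.inter_eq_right.2 hsub] at hle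
  have hxyK : ¬ (x ∈ K ∧ y ∈ K) := fun h =>
    hxyC.elim (Set.disjoint_left.1 hCK · h.1) (Set.disjoint_left.1 hCK · h.2)
  have := hK.four_le x y hxy hxyK
  omega

include hthin in
/-- The neighbours of a light vertex having a neighbour outside form a clique, since the components
they lead to all meet the clique `K`. -/
theorem isClique_boundary (hv : IsLight G v) :
    G.IsClique {x | G.Adj v x ∧ ∃ u ∉ insert v (G.neighborSet v), G.Adj x u} := by
  have key {x u : V} (hu : u ∉ insert v (G.neighborSet v)) (hxu : G.Adj x u) :
      ∃ C ⊆ (insert v (G.neighborSet v))ᶜ, u ∈ C ∧ (G.induce C).Connected ∧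
        (∀ a ∈ C, ∀ b ∈ (insert v (G.neighborSet v))ᶜ, G.Adj a b → b ∈ C) ∧ ∃ k ∈ C, k ∈ K := by
    obtain ⟨C, hCU, huC, hC, hclosed⟩ := exists_connected_closed G (U := (insert v _)ᶜ) hu
    exact ⟨C, hCU, huC, hC, hclosed, Set.not_disjoint_iff.1 <| hK.not_disjoint_of_closed hG hthin hv
      hC (Set.disjoint_left.2 hCU) hclosed huC hxu.symm⟩
  rintro x ⟨hvx, u, hu, hxu⟩ y ⟨hvy, w, hw, hyw⟩ hxy
  obtain ⟨C, hCU, huC, hC, hclosed, k, hkC, hkK⟩ := key hu hxu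
  obtain ⟨D, hDU, hwD, hD, -, l, hlD, hlK⟩ := key hw hyw
  have hlC : l ∈ C := by
    obtain rfl | hkl := eq_or_ne k l
    · exact hkC
    · exact hclosed k hkC l (hDU hlD) (hK.isClique hkK hlK hkl)
  have hCD : (G.induce (C ∪ D)).Connected :=
    SimpleGraph.induce_union_connected hC.preconnected hD.preconnected ⟨l, hlC, hlD⟩
  exact hv.isClique_attachments hG hCD (Set.disjoint_left.2 (Set.union_subset hCU hDU))
    ⟨hvx, u, .inl huC, hxu⟩ ⟨hvy, w, .inr hwD, hyw⟩ hxy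

include hthin in
theorem eight_le_ncard_neighborSet (hvK : v ∉ K) (hne : (G.neighborSet v).Nonempty) :
    8 ≤ (G.neighborSet v).ncard := by
  by_contra! h7
  have hv := hK.isLight hvK hne (by omega)
  let A : Set V := {x | G.Adj v x ∧ ∃ u ∉ insert v (G.neighborSet v), G.Adj x u}
  have hA : A.ncard ≤ 3 :=
    hv.ncard_le_three_of_isClique hG (hK.isClique_boundary hG hthin hv) fun x hx => hx.1
  obtain ⟨x, hvx, hxA⟩ : ∃ x ∈ G.neighborSet v, x ∉ A :=
    Set.exists_mem_notMem_of_ncard_lt_ncard (hA.trans_lt (by have := hv.six_le_ncard hG; omega))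
  obtain ⟨y, hy, hyK⟩ : ∃ y ∈ G.commonNeighbors v x, y ∉ K :=
    Set.exists_mem_notMem_of_ncard_lt_ncard (hK.ncard_le.trans_lt (hv.four_le x hvx))
  have hsub : G.commonNeighbors x y ⊆ insert v (G.neighborSet v ∩ G.commonNeighbors x y) := by
    intro b hb
    by_cases hbv : b ∈ insert v (G.neighborSet v)
    · exact hbv.imp id fun h => ⟨h, hb⟩
    · exact absurd ⟨hvx, b, hbv, hb.1⟩ hxA
  have hle := hv.ncard_commonNeighbors_le_two hG hvx hy.1 hy.2
  have hcard := (Set.ncard_le_ncard hsub).trans (Set.ncard_insert_le _ _)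
  have := hK.four_le x y hy.2 fun h => hyK h.2
  omega

end IsThickOutside

end ThinEdges

/-! ### Contraction of an edge -/

section Contraction

variable {V : Type*} {G : SimpleGraph V} {u v : V}

/-- The quotient map of the contraction of the edge `uv` into `u`: the contracted graph is
`G.map (mergeInto h)`, on the vertices other than `v`. -/
noncomputable def mergeInto (h : u ≠ v) (x : V) : {x // x ≠ v} :=
  if hx : x = v then ⟨u, h⟩ else ⟨x, hx⟩

theorem val_mergeInto (h : u ≠ v) (x : V) : (mergeInto h x : V) = if x = v then u else x := by
  unfold mergeInto
  split_ifs <;> rfl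

theorem mergeInto_val (h : u ≠ v) (x : {x // x ≠ v}) : mergeInto h x = x := dif_neg x.2

theorem mergeInto_eq_iff (h : u ≠ v) {x : V} {y : {x // x ≠ v}} :
    mergeInto h x = y ↔ x = y ∨ x = v ∧ u = y := by
  rw [Subtype.ext_iff, val_mergeInto]
  have := y.2
  grind

theorem mergeInto_left_eq_right (h : u ≠ v) : mergeInto h u = mergeInto h v :=
  (mergeInto_val h ⟨u, h⟩).trans (by rw [mergeInto, dif_pos rfl])

theorem hasMinor_contract (huv : G.Adj u v) : HasMinor G (G.map (mergeInto huv.ne)) := by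
  refine hasMinor_map fun w => connected_induce_of_isClique ?_ ⟨w, mergeInto_val huv.ne w⟩
  rintro x hx y hy hxy
  have hx := (mergeInto_eq_iff huv.ne).1 hx
  have hy := (mergeInto_eq_iff huv.ne).1 hy
  grind [huv.symm]

variable [Finite V]

/-- The edges lost in the contraction are `uv` and one of each pair that becomes parallel. -/
theorem ncard_edgeSet_le_contract (huv : G.Adj u v) :
    G.edgeSet.ncard ≤
      (G.map (mergeInto huv.ne)).edgeSet.ncard + (G.commonNeighbors u v).ncard + 1 := by
  let L : Set (Sym2 V) := insert s(u, v) ((fun w => s(v, w)) '' G.commonNeighbors u v)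
  have hL : L.ncard ≤ (G.commonNeighbors u v).ncard + 1 :=
    (Set.ncard_insert_le _ _).trans (Nat.add_le_add_right (Set.ncard_image_le (Set.toFinite _)) 1)
  have mem_L {x y : V} : s(x, y) ∈ L ↔ s(x, y) = s(u, v) ∨
      ∃ w, (G.Adj u w ∧ G.Adj v w) ∧ s(v, w) = s(x, y) := Iff.rfl
  have hinj : Set.InjOn (Sym2.map (mergeInto huv.ne)) (G.edgeSet \ L) := by
    intro e he e' he' hee'
    induction e with | _ a b
    induction e' with | _ c d
    simp only [Set.mem_sdiff, SimpleGraph.mem_edgeSet, mem_L, Sym2.eq_iff] at he he'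
    simp only [Sym2.map_mk, Sym2.eq_iff, Subtype.ext_iff, val_mergeInto] at hee' ⊢
    grind [G.adj_comm, G.ne_of_adj]
  have hmaps : Set.MapsTo (Sym2.map (mergeInto huv.ne)) (G.edgeSet \ L)
      (G.map (mergeInto huv.ne)).edgeSet := by
    intro e he
    induction e with | _ a b
    simp only [Set.mem_sdiff, SimpleGraph.mem_edgeSet, mem_L, Sym2.eq_iff] at he
    refine ⟨fun hab => ?_, a, b, he.1, rfl, rfl⟩
    replace hab := congrArg Subtype.val (show mergeInto huv.ne a = mergeInto huv.ne b from hab)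
    rw [val_mergeInto, val_mergeInto] at hab
    grind [G.ne_of_adj]
  have := Set.ncard_le_ncard_of_injOn _ hmaps hinj (Set.toFinite _)
  have := Set.ncard_le_ncard_sdiff_add_ncard G.edgeSet L
  omega

end Contraction

/-! ### Mader's bound and thin edges -/

section EdgeCount

universe u
variable {V : Type u} {G : SimpleGraph V}

theorem exists_le_ncard_edgeSet_eq {m : ℕ} (hm : m ≤ G.edgeSet.ncard) :
    ∃ H ≤ G, H.edgeSet.ncard = m := by
  obtain ⟨t, ht, rfl⟩ := Set.exists_subset_card_eq hm
  refine ⟨.fromEdgeSet t, fun a b h => ht h.1, ?_⟩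
  rw [SimpleGraph.edgeSet_fromEdgeSet, sdiff_eq_left.2]
  exact Set.disjoint_left.2 fun e he => G.not_isDiag_of_mem_edgeSet (ht he)

variable [Fintype V]

theorem ncard_neighborSet (v : V) : (G.neighborSet v).ncard = G.degree v :=
  Set.ncard_eq_toFinset_card' _

theorem ncard_edgeSet : G.edgeSet.ncard = G.edgeFinset.card :=
  Set.ncard_eq_toFinset_card' _

theorem ncard_edgeSet_induce_compl_singleton {v : V} (hv : G.degree v = 0) :
    (G.induce {v}ᶜ).edgeSet.ncard = G.edgeSet.ncard := by
  rw [Set.ncard_eq_toFinset_card', ncard_edgeSet]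
  have h₁ := G.card_edgeFinset_induce_compl_singleton v
  have h₂ := G.card_edgeFinset_deleteIncidenceSet v
  rw [hv, Nat.sub_zero] at h₂
  rw [← h₂, ← h₁]
  congr!

theorem exists_degree_lt {k : ℕ} (h : 2 * G.edgeSet.ncard < k * Fintype.card V) :
    ∃ v, G.degree v < k := by
  by_contra! hk
  have := Finset.card_nsmul_le_sum Finset.univ (fun v => G.degree v) k fun v _ => hk v
  rw [G.sum_degrees_eq_twice_card_edges, ← ncard_edgeSet, Finset.card_univ, smul_eq_mul,
    mul_comm] at this
  omega

/-- Mader's bound on the number of edges of a graph without `K₆` minor. -/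
def MaderBound (G : SimpleGraph V) : Prop :=
  4 ≤ Fintype.card V → G.edgeSet.ncard + 10 ≤ 4 * Fintype.card V

theorem maderBound_of_card_le_five (h5 : Fintype.card V ≤ 5) : MaderBound G := by
  intro h4
  have h := G.card_edgeFinset_le_card_choose_two
  rw [← ncard_edgeSet] at h
  interval_cases Fintype.card V <;> simp only [Nat.choose] at h <;> omega

theorem IsThickOutside.degree_ne_zero {K : Set V} (hK : IsThickOutside G K) {w : V} (hw : w ∉ K)
    (hthin : HasThinEdges (G.induce {w}ᶜ)) {x y : V} (hxy : G.Adj x y)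
    (hxyK : ¬ (x ∈ K ∧ y ∈ K)) : G.degree w ≠ 0 := by
  intro hw0
  have hiso {a b : V} (hab : G.Adj a b) : a ∈ ({w}ᶜ : Set V) := by
    rintro rfl
    exact ((G.degree_pos_iff_exists_adj a).2 ⟨b, hab⟩).ne' hw0
  obtain ⟨a, -, b, -, hab, habK, hle⟩ := hthin.exists_of_induce hK.isClique
    (Set.subset_compl_singleton_iff.2 hw) hK.ncard_le (hiso hxy) (hiso hxy.symm) hxy hxyK
  rw [Set.inter_eq_right.2 fun z hz => hiso hz.1.symm] at hle
  have := hK.four_le a b hab habK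
  omega

theorem IsThickOutside.four_mul_card_lt {K : Set V} (hK : IsThickOutside G K)
    (hdeg : ∀ v ∉ K, 8 ≤ G.degree v) : 4 * Fintype.card V < G.edgeSet.ncard + 10 := by
  have hdegK (v) (hv : v ∈ K) : K.ncard - 1 ≤ G.degree v := by
    rw [← ncard_neighborSet, ← Set.ncard_sdiff_singleton_of_mem hv]
    exact Set.ncard_le_ncard fun w hw => hK.isClique hv hw.1 (Ne.symm hw.2)
  have hsum : K.ncard * (K.ncard - 1) + (Fintype.card V - K.ncard) * 8 ≤ ∑ v, G.degree v := by
    rw [← Finset.sum_add_sum_compl K.toFinset, Set.ncard_eq_toFinset_card' K, ← Finset.card_compl]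
    refine add_le_add (Finset.card_nsmul_le_sum _ _ _ fun v hv => ?_)
      (Finset.card_nsmul_le_sum _ _ 8 fun v hv => ?_)
    · rw [← Set.ncard_eq_toFinset_card' K]
      exact hdegK v (Set.mem_toFinset.1 hv)
    · exact hdeg v (by simpa using hv)
  have hKV : K.ncard ≤ Fintype.card V := by
    rw [← Nat.card_eq_fintype_card, ← Set.ncard_univ]
    exact Set.ncard_le_ncard (Set.subset_univ K)
  rw [G.sum_degrees_eq_twice_card_edges, ← ncard_edgeSet] at hsum
  have := hK.ncard_le
  interval_cases K.ncard <;> omega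

variable (hG : ¬ HasMinor G (⊤ : SimpleGraph (Fin 6)))
include hG

theorem maderBound_of_smaller
    (hbound : ∀ (W : Type u) [Fintype W] (H : SimpleGraph W), Fintype.card W < Fintype.card V →
      ¬ HasMinor H (⊤ : SimpleGraph (Fin 6)) → MaderBound H)
    (hthin : ∀ T : Set V, T ≠ Set.univ → ∀ H ≤ G, HasThinEdges (H.induce T)) : MaderBound G := by
  obtain h5 | h6 : Fintype.card V ≤ 5 ∨ 6 ≤ Fintype.card V := by omega
  · exact maderBound_of_card_le_five h5
  intro _
  by_contra! hlt
  obtain ⟨H, hHG, hH⟩ :=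
    exists_le_ncard_edgeSet_eq (G := G) (m := 4 * Fintype.card V - 9) (by omega)
  have hH6 : ¬ HasMinor H (⊤ : SimpleGraph (Fin 6)) := fun h => hG ((hasMinor_of_le hHG).trans h)
  have hcard (v : V) : Fintype.card {x // x ≠ v} = Fintype.card V - 1 := Set.card_ne_eq v
  obtain ⟨v, hv⟩ : ∃ v, H.degree v < 8 := exists_degree_lt (by omega)
  have hv0 : H.degree v ≠ 0 := by
    intro hv0
    have hcard' : Fintype.card ↥({v}ᶜ : Set V) = Fintype.card V - 1 := hcard v
    have h := hbound ↥({v}ᶜ : Set V) (H.induce {v}ᶜ) (by omega)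
      (fun h => hH6 ((hasMinor_induce H _).trans h)) (by omega)
    rw [ncard_edgeSet_induce_compl_singleton hv0] at h
    omega
  have hthick : IsThickOutside H ∅ := by
    refine ⟨Set.pairwise_empty _, by simp, fun x y hxy _ => ?_⟩
    have h := hbound {z // z ≠ y} (H.map (mergeInto hxy.ne)) (by rw [hcard]; omega)
      (fun h => hH6 ((hasMinor_contract hxy).trans h)) (by rw [hcard]; omega)
    have := ncard_edgeSet_le_contract hxy
    rw [hcard] at h
    omega
  have h8 := hthick.eight_le_ncard_neighborSet hH6 (fun T hT => hthin T hT H hHG)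
    (Set.notMem_empty v) (Set.nonempty_of_ncard_ne_zero (by rwa [ncard_neighborSet]))
  rw [ncard_neighborSet] at h8
  omega

theorem hasThinEdges_of_maderBound (hbound : MaderBound G)
    (hthin : ∀ T : Set V, T ≠ Set.univ → HasThinEdges (G.induce T)) : HasThinEdges G := by
  rintro K hK hK3 ⟨x, y, hxy, hxyK⟩
  by_contra! h
  have hthick : IsThickOutside G K :=
    ⟨hK, hK3, fun a b hab habK => h a b hab (not_and.1 habK)⟩
  have hdeg (v) (hv : v ∉ K) : 8 ≤ G.degree v := by
    rw [← ncard_neighborSet]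
    refine hthick.eight_le_ncard_neighborSet hG hthin hv (Set.nonempty_of_ncard_ne_zero ?_)
    rw [ncard_neighborSet]
    exact hthick.degree_ne_zero hv (hthin {v}ᶜ (by simp)) hxy hxyK
  obtain ⟨v, hv⟩ : ∃ v, v ∉ K := by grind
  have := (hdeg v hv).trans_lt (G.degree_lt_card_verts v)
  have := hbound (by omega)
  have := hthick.four_mul_card_lt hdeg
  omega

theorem maderBound_and_hasThinEdges : MaderBound G ∧ HasThinEdges G := by
  induction hn : Fintype.card V using Nat.strong_induction_on generalizing V with | _ n ih
  subst hn
  have hthin (T : Set V) (hT : T ≠ Set.univ) (H) (hHG : H ≤ G) : HasThinEdges (H.induce T) :=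
    have ⟨_, hx⟩ := (Set.ne_univ_iff_exists_notMem T).1 hT
    (ih _ (Fintype.card_subtype_lt hx) (fun h => hG <|
      (hasMinor_of_le hHG).trans ((hasMinor_induce H T).trans h)) rfl).2
  have hbound : MaderBound G :=
    maderBound_of_smaller hG (fun W _ H hlt hH => (ih _ hlt hH rfl).1) hthin
  exact ⟨hbound, hasThinEdges_of_maderBound hG hbound fun T hT => hthin T hT G le_rfl⟩

end EdgeCount

/-! ### Cones -/

section Cone

variable {V : Type*} {G : SimpleGraph V}

/-- The graph `G` together with a new vertex `none` adjacent to the non-isolated vertices of `G`.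
Passing to the cone adds one to the order of the forbidden complete minor and one to the number of
triangles at each edge, without creating edges in no triangle. -/
def cone (G : SimpleGraph V) : SimpleGraph (Option V) where
  Adj
    | some x, some y => G.Adj x y
    | some x, none => x ∈ G.support
    | none, some y => y ∈ G.support
    | none, none => False
  symm.symm := by
    rintro (_ | x) (_ | y) h
    exacts [h, h, h, h.symm]
  loopless.irrefl := by
    rintro (_ | x) h
    exacts [h, G.irrefl h]

theorem hasMinor_of_cone {r : ℕ} (h : HasMinor (cone G) (⊤ : SimpleGraph (Fin (r + 1)))) :
    HasMinor G (⊤ : SimpleGraph (Fin r)) := by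
  let f : (cone G).induce {none}ᶜ →g G :=
    ⟨fun x => x.1.get (Option.isSome_iff_ne_none.2 x.2), by
      rintro ⟨_ | x, hx⟩ ⟨_ | y, hy⟩ h
      exacts [absurd rfl hx, absurd rfl hx, absurd rfl hy, h]⟩
  refine (hasMinor_of_injective_hom f fun x y hxy => ?_).trans
    (hasMinor_induce_compl_singleton h none)
  exact Subtype.ext (Option.get_inj.1 hxy)

variable [Finite V] {x y : V}

theorem ncard_commonNeighbors_cone (hxy : G.Adj x y) :
    ((cone G).commonNeighbors (some x) (some y)).ncard = (G.commonNeighbors x y).ncard + 1 := by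
  have : (cone G).commonNeighbors (some x) (some y) =
      insert none (some '' G.commonNeighbors x y) := by
    ext (_ | z)
    · exact iff_of_true ⟨⟨y, hxy⟩, ⟨x, hxy.symm⟩⟩ (.inl rfl)
    · simp [cone, SimpleGraph.mem_commonNeighbors]
  rw [this, Set.ncard_insert_of_notMem (by simp),
    Set.ncard_image_of_injective _ (Option.some_injective V)]

theorem ncard_neighborSet_le_commonNeighbors_cone :
    (G.neighborSet x).ncard ≤ ((cone G).commonNeighbors none (some x)).ncard := by
  rw [← Set.ncard_image_of_injective _ (Option.some_injective V)]
  refine Set.ncard_le_ncard ?_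
  rintro _ ⟨y, hxy, rfl⟩
  exact ⟨⟨x, hxy.symm⟩, hxy⟩

theorem ncard_commonNeighbors_lt (hxy : G.Adj x y) :
    (G.commonNeighbors x y).ncard < (G.neighborSet x).ncard :=
  Set.ncard_lt_ncard ⟨fun _ hz => hz.1, fun h => G.irrefl (h hxy).2⟩

theorem exists_adj_ncard_commonNeighbors_add_three_le_of_cone {r : ℕ}
    (h : ∃ x y, (cone G).Adj x y ∧ ((cone G).commonNeighbors x y).ncard + 3 ≤ r + 1) :
    ∃ x y, G.Adj x y ∧ (G.commonNeighbors x y).ncard + 3 ≤ r := by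
  obtain ⟨x, y, hxy, hle⟩ := h
  have apex {z : V} (hz : z ∈ G.support)
      (hle : ((cone G).commonNeighbors none (some z)).ncard + 3 ≤ r + 1) :
      ∃ x y, G.Adj x y ∧ (G.commonNeighbors x y).ncard + 3 ≤ r := by
    obtain ⟨w, hzw⟩ := hz
    have := ncard_neighborSet_le_commonNeighbors_cone (G := G) (x := z)
    have := ncard_commonNeighbors_lt hzw
    exact ⟨z, w, hzw, by omega⟩
  rcases x with _ | x <;> rcases y with _ | y
  · exact hxy.elim
  · exact apex hxy hle
  · exact apex hxy ((cone G).commonNeighbors_symm _ _ ▸ hle)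
  · rw [ncard_commonNeighbors_cone (G := G) hxy] at hle
    exact ⟨x, y, hxy, by omega⟩

end Cone

section ContractibleEdges

universe u
variable {V : Type u} [Finite V] {G : SimpleGraph V} {r : ℕ}

theorem exists_adj_ncard_commonNeighbors_add_three_le (hr : r ≤ 6)
    (hG : ¬ HasMinor G (⊤ : SimpleGraph (Fin r))) (hne : ∃ x y, G.Adj x y) :
    ∃ x y, G.Adj x y ∧ (G.commonNeighbors x y).ncard + 3 ≤ r := by
  induction hr using Nat.decreasingInduction generalizing V with
  | self =>
    have := Fintype.ofFinite V
    obtain ⟨x, y, hxy⟩ := hne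
    obtain ⟨a, b, hab, -, hle⟩ := (maderBound_and_hasThinEdges hG).2 ∅ (Set.pairwise_empty _)
      (by simp) ⟨x, y, hxy, by simp⟩
    exact ⟨a, b, hab, by omega⟩
  | of_succ r _ ih =>
    obtain ⟨x, y, hxy⟩ := hne
    exact exists_adj_ncard_commonNeighbors_add_three_le_of_cone <|
      ih (fun h => hG (hasMinor_of_cone h)) ⟨some x, some y, hxy⟩

end ContractibleEdges

/-! ### Linear families of linear maps -/

section LinearFamilies

section

variable {K X Y : Type*} [Field K] [AddCommGroup X] [Module K X] [FiniteDimensional K X]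
  [AddCommGroup Y] [Module K Y] {A B : X →ₗ[K] Y}

/-- If `L` is a left inverse of `A`, a vector killed by `B + t • A` is an eigenvector of `L ∘ B`. -/
theorem finite_setOf_not_injective_add_smul (hA : Function.Injective A) :
    {t : K | ¬ Function.Injective (B + t • A)}.Finite := by
  obtain ⟨L, hL⟩ := A.exists_leftInverse_of_injective (LinearMap.ker_eq_bot.2 hA)
  refine ((Module.End.finite_hasEigenvalue (L ∘ₗ B)).preimage neg_injective.injOn).subset ?_
  intro t ht
  simp only [injective_iff_map_eq_zero, not_forall] at ht
  obtain ⟨x, hx, hx0⟩ := ht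
  refine Module.End.hasEigenvalue_of_hasEigenvector (x := x)
    (Module.End.hasEigenvector_iff.2 ⟨Module.End.mem_eigenspace_iff.2 ?_, hx0⟩)
  have hLA : L (A x) = x := LinearMap.congr_fun hL x
  have hLx : L (B x) + t • x = 0 := by
    simpa only [LinearMap.add_apply, LinearMap.smul_apply, map_add, map_smul, hLA, map_zero]
      using congrArg L hx
  rw [LinearMap.comp_apply, neg_smul]
  exact eq_neg_of_add_eq_zero_left hLx

/-- As `s → ∞`, the map `B + s • A`, rescaled by `s` in the direction of `x₀`, is asymptotic to
`s • (A + ℓ.smulRight (B x₀))`. -/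
theorem exists_injective_add_smul [Infinite K] {ℓ : X →ₗ[K] K} {x₀ : X} (hℓ : ℓ x₀ = 1)
    (hA : A x₀ = 0) (hinj : Function.Injective (A + ℓ.smulRight (B x₀))) :
    ∃ s : K, Function.Injective (B + s • A) := by
  obtain ⟨s, hs⟩ := ((finite_setOf_not_injective_add_smul (B := B - ℓ.smulRight (B x₀))
    hinj).insert 0).exists_notMem
  simp only [Set.mem_insert_iff, Set.mem_ofPred_eq, not_or, not_not] at hs
  obtain ⟨hs0, hs⟩ := hs
  refine ⟨s, (injective_iff_map_eq_zero _).2 fun x hx => ?_⟩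
  have hy : s • x + ((1 - s) * ℓ x) • x₀ = 0 := by
    refine (injective_iff_map_eq_zero _).1 hs _ ?_
    have hx' : B x + s • A x = 0 := hx
    simp only [LinearMap.add_apply, LinearMap.sub_apply, LinearMap.smul_apply,
      LinearMap.smulRight_apply, map_add, map_smul, hA, hℓ]
    refine Eq.trans ?_ ((congrArg (s • ·) hx').trans (smul_zero s))
    module
  have hℓx : ℓ x = 0 := by
    have h := congrArg ℓ hy
    simp only [map_add, map_smul, smul_eq_mul, hℓ, map_zero] at h
    linear_combination h
  rw [hℓx, mul_zero, zero_smul, add_zero] at hy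
  exact (smul_eq_zero.1 hy).resolve_left hs0

end

section

variable {F X Y : Type*} [NormedAddCommGroup F] [NormedSpace ℝ F]
  [NormedAddCommGroup X] [NormedSpace ℝ X] [FiniteDimensional ℝ X]
  [NormedAddCommGroup Y] [NormedSpace ℝ Y] (A : F →ₗ[ℝ] X →ₗ[ℝ] Y)

theorem isOpen_setOf_injective [FiniteDimensional ℝ F] :
    IsOpen {f | Function.Injective (A f)} := by
  let T : F →ₗ[ℝ] X →L[ℝ] Y := LinearMap.toContinuousLinearMap.toLinearMap ∘ₗ A
  exact ContinuousLinearMap.isOpen_injective.preimage T.continuous_of_finiteDimensional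

theorem dense_setOf_injective (h : ∃ f, Function.Injective (A f)) :
    Dense {f | Function.Injective (A f)} := by
  obtain ⟨f₀, h₀⟩ := h
  intro f
  have hcl : (0 : ℝ) ∈ closure {t : ℝ | ¬ Function.Injective (A f + t • A f₀)}ᶜ :=
    (finite_setOf_not_injective_add_smul h₀).countable.dense_compl ℝ 0
  have hcont : Continuous fun t : ℝ => f + t • f₀ := by fun_prop
  have hmem := map_mem_closure (t := {f | Function.Injective (A f)}) hcont hcl fun t ht => by
    rw [Set.mem_ofPred_eq, map_add, map_smul]
    exact not_not.1 ht
  rwa [zero_smul, add_zero] at hmem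

end

end LinearFamilies

/-! ### Stresses -/

section StressMap

variable {V : Type*} {G : SimpleGraph V}

/-- The edge weights on `G`, encoded as symmetric functions vanishing off the edges: a linear space
that, unlike `G.edgeSet → ℝ`, makes sums over the neighbours of a vertex sums over all vertices. -/
def edgeWeights (G : SimpleGraph V) : Submodule ℝ (V → V → ℝ) where
  carrier := {w | (∀ x y, w x y = w y x) ∧ ∀ x y, ¬ G.Adj x y → w x y = 0}
  add_mem' := fun {w₁ w₂} ⟨h₁, h₁'⟩ ⟨h₂, h₂'⟩ =>
    ⟨fun x y => congrArg₂ (· + ·) (h₁ x y) (h₂ x y), fun x y h => by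
      rw [Pi.add_apply, Pi.add_apply, h₁' x y h, h₂' x y h, add_zero]⟩
  zero_mem' := ⟨fun _ _ => rfl, fun _ _ _ => rfl⟩
  smul_mem' := fun c w ⟨h, h'⟩ =>
    ⟨fun x y => congrArg (c • ·) (h x y), fun x y hxy => by
      rw [Pi.smul_apply, Pi.smul_apply, h' x y hxy, smul_zero]⟩

/-- The weight `1` on the edge `uv` and `0` elsewhere. -/
noncomputable def singleWeight {u v : V} (huv : G.Adj u v) : edgeWeights G :=
  ⟨fun x y => if s(x, y) = s(u, v) then 1 else 0, fun _ _ => by simp only [Sym2.eq_swap],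
    fun _ _ hxy => if_neg fun h => hxy ((G.adj_congr_of_sym2 h).2 huv)⟩

variable [Fintype V] {E : Type*} [AddCommGroup E] [Module ℝ E]

/-- The linear map that sends edge weights to the resulting forces at the vertices in the placement
`p`; its kernel consists of the stresses of `p`. It is linear in `p` too. -/
noncomputable def stressMap (G : SimpleGraph V) (E : Type*) [AddCommGroup E] [Module ℝ E] :
    (V → E) →ₗ[ℝ] edgeWeights G →ₗ[ℝ] V → E :=
  LinearMap.mk₂ ℝ (fun p w x => ∑ y, w.1 x y • (p x - p y))
    (fun p q w => by
      ext x
      simp only [Pi.add_apply, add_sub_add_comm, smul_add, Finset.sum_add_distrib])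
    (fun c p w => by
      ext x
      simp only [Pi.smul_apply, ← smul_sub, smul_comm _ c, Finset.smul_sum])
    (fun p w w' => by
      ext x
      simp only [Submodule.coe_add, Pi.add_apply, add_smul, Finset.sum_add_distrib])
    (fun c p w => by
      ext x
      simp only [Submodule.coe_smul, Pi.smul_apply, smul_assoc, Finset.smul_sum])

theorem stressMap_apply (p : V → E) (w : edgeWeights G) (x : V) :
    stressMap G E p w x = ∑ y, w.1 x y • (p x - p y) := rfl

theorem stressMap_singleWeight {u v : V} (huv : G.Adj u v) (p : V → E) :
    stressMap G E p (singleWeight huv) = Pi.single u (p u - p v) + Pi.single v (p v - p u) := by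
  ext x
  rw [stressMap_apply]
  simp only [singleWeight, Sym2.eq_iff, ite_smul, one_smul, zero_smul, Pi.add_apply,
    Pi.single_apply]
  obtain rfl | hxu := eq_or_ne x u
  · simp [huv.ne]
  · obtain rfl | hxv := eq_or_ne x v
    · simp [huv.ne']
    · simp [hxu, hxv]

theorem exists_injective_stressMap_of_forall_not_adj (hG : ∀ x y, ¬ G.Adj x y) :
    ∃ p : V → E, Function.Injective (stressMap G E p) := by
  refine ⟨0, (injective_iff_map_eq_zero _).2 fun w _ => ?_⟩
  ext x y
  exact w.2.2 x y (hG x y)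

/-- The edge weights of `G` are the functions on the edge set. -/
noncomputable def edgeWeightsEquiv (G : SimpleGraph V) : (G.edgeSet → ℝ) ≃ edgeWeights G where
  toFun w := ⟨fun x y => if h : G.Adj x y then w ⟨s(x, y), G.mem_edgeSet.2 h⟩ else 0,
    fun x y => by simp only [G.adj_comm x y, Sym2.eq_swap (a := x)], fun x y h => dif_neg h⟩
  invFun w e := Sym2.lift ⟨w.1, w.2.1⟩ e.1
  left_inv w := by
    ext ⟨e, he⟩
    induction e with | _ x y
    exact dif_pos he
  right_inv w := by
    ext x y
    by_cases h : G.Adj x y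
    · exact dif_pos h
    · exact (dif_neg h).trans (w.2.2 x y h).symm

theorem isStress_iff {d : ℕ} {p : V → EuclideanSpace ℝ (Fin d)} {w : G.edgeSet → ℝ} :
    IsStress G d p w ↔ stressMap G _ p (edgeWeightsEquiv G w) = 0 := by
  rw [funext_iff]
  refine forall_congr' fun x => ?_
  rw [stressMap_apply]
  simp only [edgeWeightsEquiv, Equiv.coe_fn_mk, dite_smul, zero_smul, Pi.zero_apply]

theorem stressFreeEmbeddings_eq (G : SimpleGraph V) (d : ℕ) :
    StressFreeEmbeddings G d =
      {p | Function.Injective (stressMap G (EuclideanSpace ℝ (Fin d)) p)} := by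
  ext p
  have h0 : edgeWeightsEquiv G 0 = 0 := by
    ext x y
    exact dite_eq_right_iff.2 fun _ => rfl
  simp only [StressFreeEmbeddings, Set.mem_ofPred_eq, injective_iff_map_eq_zero, isStress_iff]
  rw [(edgeWeightsEquiv G).forall_congr_left]
  simp only [Equiv.apply_symm_apply, Equiv.symm_apply_eq, h0]

theorem genericallyStressFree_of_exists_injective {d : ℕ}
    (h : ∃ p, Function.Injective (stressMap G (EuclideanSpace ℝ (Fin d)) p)) :
    GenericallyStressFree G d := by
  rw [GenericallyStressFree, stressFreeEmbeddings_eq]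
  exact ⟨isOpen_setOf_injective _, dense_setOf_injective _ h⟩

end StressMap

section Pushforward

variable {V W : Type*} {G : SimpleGraph V} [Fintype V]

/-- The weights on `G.map f` obtained by adding up the weights of parallel edges. -/
noncomputable def mapWeights (f : V → W) (w : edgeWeights G) : edgeWeights (G.map f) :=
  ⟨fun a b => if a = b then 0 else ∑ x with f x = a, ∑ y with f y = b, w.1 x y, by
    refine ⟨fun a b => ?_, fun a b hab => ite_eq_left_iff.2 fun hne => ?_⟩
    · beta_reduce
      rw [Finset.sum_comm]
      simp only [eq_comm (a := a) (b := b), w.2.1 _ _]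
    · refine Finset.sum_eq_zero fun x hx => Finset.sum_eq_zero fun y hy => w.2.2 x y fun h => ?_
      exact hab ⟨hne, x, y, h, (Finset.mem_filter.1 hx).2, (Finset.mem_filter.1 hy).2⟩⟩

theorem mapWeights_apply {f : V → W} {w : edgeWeights G} {a b : W} (hab : a ≠ b) :
    (mapWeights f w).1 a b = ∑ x with f x = a, ∑ y with f y = b, w.1 x y := if_neg hab

variable [Fintype W] {E : Type*} [AddCommGroup E] [Module ℝ E]

theorem stressMap_mapWeights (f : V → W) (p : W → E) (w : edgeWeights G) (a : W) :
    stressMap (G.map f) E p (mapWeights f w) a = ∑ x with f x = a, stressMap G E (p ∘ f) w x := by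
  have hterm (b : W) : (mapWeights f w).1 a b • (p a - p b) =
      ∑ x with f x = a, ∑ y with f y = b, w.1 x y • (p (f x) - p (f y)) := by
    have hfibre : ∑ x with f x = a, ∑ y with f y = b, w.1 x y • (p (f x) - p (f y)) =
        (∑ x with f x = a, ∑ y with f y = b, w.1 x y) • (p a - p b) := by
      simp only [Finset.sum_smul]
      refine Finset.sum_congr rfl fun x hx => Finset.sum_congr rfl fun y hy => ?_
      rw [(Finset.mem_filter.1 hx).2, (Finset.mem_filter.1 hy).2]
    obtain rfl | hab := eq_or_ne a b
    · rw [hfibre, sub_self, smul_zero, smul_zero]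
    · rw [hfibre, mapWeights_apply hab]
  rw [stressMap_apply, Finset.sum_congr rfl fun b _ => hterm b, Finset.sum_comm]
  refine Finset.sum_congr rfl fun x _ => ?_
  exact Finset.sum_fiberwise _ _ _

theorem mapWeights_eq_zero {f : V → W} {p : W → E} {w : edgeWeights G}
    (hp : Function.Injective (stressMap (G.map f) E p))
    (hw : ∀ a, ∑ x with f x = a, stressMap G E (p ∘ f) w x = 0) : mapWeights f w = 0 :=
  (injective_iff_map_eq_zero _).1 hp _ <|
    funext fun a => (stressMap_mapWeights f p w a).trans (hw a)

end Pushforward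

/-! ### Vertex splitting -/

section Placements

variable {V E : Type*} [NormedAddCommGroup E] [NormedSpace ℝ E]
  [FiniteDimensional ℝ E]

theorem dense_setOf_linearIndependent_sub [Finite V] {ι : Type*} [Fintype ι] {a : V} {b : ι → V}
    (hb : Function.Injective b) (ha : ∀ i, b i ≠ a)
    (hι : Fintype.card ι ≤ Module.finrank ℝ E) :
    Dense {p : V → E | LinearIndependent ℝ fun i => p a - p (b i)} := by
  have := Fintype.ofFinite V
  let A : (V → E) →ₗ[ℝ] (ι → ℝ) →ₗ[ℝ] E := Fintype.bilinearCombination ℝ ℝ ∘ₗ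
    LinearMap.pi fun i => .proj (R := ℝ) (φ := fun _ => E) a - .proj (b i)
  have hA : {p : V → E | LinearIndependent ℝ fun i => p a - p (b i)} =
      {p | Function.Injective (A p)} := by
    ext p
    exact linearIndependent_iff_injective_fintypeLinearCombination
  rw [hA]
  refine dense_setOf_injective A ?_
  obtain ⟨c⟩ : Nonempty (ι ↪ Fin (Module.finrank ℝ E)) :=
    Function.Embedding.nonempty_of_card_le (by rwa [Fintype.card_fin])
  let e : ι → E := Module.finBasis ℝ E ∘ c
  have he : LinearIndependent ℝ e := (Module.finBasis ℝ E).linearIndependent.comp c c.injective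
  refine ⟨Function.extend b (-e) 0, hA.le ?_⟩
  rw [Set.mem_ofPred_eq]
  convert he using 2 with i
  rw [hb.extend_apply, Function.extend_apply' _ _ _ fun ⟨i, hi⟩ => ha i hi, Pi.zero_apply,
    Pi.neg_apply, zero_sub, neg_neg]

theorem exists_injective_stressMap_and_linearIndependent [Fintype V] {ι : Type*} [Fintype ι]
    {G : SimpleGraph V} {a : V} {b : ι → V} (hb : Function.Injective b) (ha : ∀ i, b i ≠ a)
    (hι : Fintype.card ι ≤ Module.finrank ℝ E)
    (hG : ∃ p : V → E, Function.Injective (stressMap G E p)) :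
    ∃ p : V → E, Function.Injective (stressMap G E p) ∧
      LinearIndependent ℝ fun i => p a - p (b i) := by
  obtain ⟨p, hp⟩ := hG
  exact (dense_setOf_linearIndependent_sub hb ha hι).inter_open_nonempty _
    (isOpen_setOf_injective (stressMap G E)) ⟨p, hp⟩

end Placements

section VertexSplitting

variable {V : Type*} {G : SimpleGraph V} {u v : V}

theorem weight_eq_zero_of_notMem_commonNeighbors {w : edgeWeights G} {x : V}
    (hw : w.1 u x + w.1 v x = 0) (hx : x ∉ G.commonNeighbors u v) : w.1 v x = 0 := by
  rw [SimpleGraph.mem_commonNeighbors, not_and_or] at hx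
  exact hx.elim (fun h => by rw [← hw, w.2.2 u x h, zero_add]) (w.2.2 v x)

variable [Fintype V]

theorem sum_mergeInto_eq {M : Type*} [AddCommMonoid M] (h : u ≠ v) (F : V → M) (a : {x // x ≠ v})
    [DecidablePred (mergeInto h · = a)] :
    ∑ x with mergeInto h x = a, F x = F a + if u = a then F v else 0 := by
  simp only [mergeInto_eq_iff h]
  split_ifs with hu
  · rw [← Finset.sum_pair a.2]
    congr 1
    ext x
    simp [hu]
  · rw [add_zero, ← Finset.sum_singleton F (a : V)]
    congr 1
    ext x
    simp [hu]

theorem mapWeights_mergeInto_apply (h : u ≠ v) (w : edgeWeights G) {x y : V} (hxy : x ≠ y)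
    (hx : x ≠ v) (hyu : y ≠ u) (hyv : y ≠ v) :
    (mapWeights (mergeInto h) w).1 ⟨x, hx⟩ ⟨y, hyv⟩ =
      w.1 x y + if u = x then w.1 v y else 0 := by
  rw [mapWeights_apply fun h => hxy (congrArg Subtype.val h), sum_mergeInto_eq]
  simp only [sum_mergeInto_eq, if_neg hyu.symm, add_zero]

theorem weight_add_weight_eq_zero (h : u ≠ v) {w : edgeWeights G}
    (hw : mapWeights (mergeInto h) w = 0) {x : V} (hxu : x ≠ u) (hxv : x ≠ v) :
    w.1 u x + w.1 v x = 0 := by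
  have := mapWeights_mergeInto_apply h w hxu.symm h hxu hxv
  rwa [hw, if_pos rfl, eq_comm] at this

theorem eq_zero_of_mapWeights_mergeInto_eq_zero (h : u ≠ v) {w : edgeWeights G}
    (hw : mapWeights (mergeInto h) w = 0) (hv : ∀ x, w.1 v x = 0) : w = 0 := by
  have hoff {x y : V} (hxy : x ≠ y) (hx : x ≠ v) (hyu : y ≠ u) (hyv : y ≠ v) : w.1 x y = 0 := by
    have := mapWeights_mergeInto_apply h w hxy hx hyu hyv
    rwa [hw, hv, ite_self, add_zero, eq_comm] at this
  ext x y
  change w.1 x y = 0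
  obtain rfl | hxy := eq_or_ne x y
  · exact w.2.2 x x G.irrefl
  obtain rfl | hxv := eq_or_ne x v
  · exact hv y
  obtain rfl | hyv := eq_or_ne y v
  · rw [w.2.1, hv]
  obtain rfl | hyu := eq_or_ne y u
  · rw [w.2.1, hoff hxy.symm hyv hxy hxv]
  · exact hoff hxy hxv hyu hyv

section

variable {E : Type*} [AddCommGroup E] [Module ℝ E]

theorem stressMap_eq_sum_commonNeighbors {p : V → E} {w : edgeWeights G} (hp : p u = p v)
    (hw : ∀ x, x ≠ u → x ≠ v → w.1 u x + w.1 v x = 0) :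
    stressMap G E p w v = ∑ i : G.commonNeighbors u v, w.1 v i • (p v - p i) := by
  rw [stressMap_apply, Finset.sum_set_coe (f := fun x => w.1 v x • (p v - p x))]
  refine (Finset.sum_subset (Finset.subset_univ _) fun x _ hx => ?_).symm
  rw [Set.mem_toFinset] at hx
  obtain rfl | hxu := eq_or_ne x u
  · rw [hp, sub_self, smul_zero]
  obtain rfl | hxv := eq_or_ne x v
  · rw [sub_self, smul_zero]
  rw [weight_eq_zero_of_notMem_commonNeighbors (hw x hxu hxv) hx, zero_smul]

theorem weight_eq_zero_of_stressMap_add_smul {p : V → E} {z : E} {w : edgeWeights G}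
    (hp : p u = p v) (hli : LinearIndependent ℝ fun i : G.commonNeighbors u v => p v - p i)
    (hz : z ∉ Submodule.span ℝ (Set.range fun i : G.commonNeighbors u v => p v - p i))
    (hsum : ∀ x, x ≠ u → x ≠ v → w.1 u x + w.1 v x = 0)
    (hw : stressMap G E p w v + w.1 u v • z = 0) (x : V) : w.1 v x = 0 := by
  rw [stressMap_eq_sum_commonNeighbors hp hsum] at hw
  have huv : w.1 u v = 0 := by
    by_contra h
    refine hz ((Submodule.smul_mem_iff _ h).1 ?_)
    rw [eq_neg_of_add_eq_zero_right hw]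
    exact neg_mem (Submodule.sum_smul_mem _ _ fun i _ => Submodule.subset_span ⟨i, rfl⟩)
  rw [huv, zero_smul, add_zero] at hw
  by_cases hx : x ∈ G.commonNeighbors u v
  · exact Fintype.linearIndependent_iff.1 hli (fun i => w.1 v i) hw ⟨x, hx⟩
  obtain rfl | hxu := eq_or_ne x u
  · rwa [w.2.1]
  obtain rfl | hxv := eq_or_ne x v
  · exact w.2.2 x x G.irrefl
  exact weight_eq_zero_of_notMem_commonNeighbors (hsum x hxu hxv) hx

theorem eq_zero_of_stressMap_add_smul (huv : G.Adj u v) {p : {x // x ≠ v} → E} {z : E}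
    (hp : Function.Injective (stressMap (G.map (mergeInto huv.ne)) E p))
    (hli : LinearIndependent ℝ fun i : G.commonNeighbors u v =>
      p (mergeInto huv.ne v) - p (mergeInto huv.ne i))
    (hz : z ∉ Submodule.span ℝ (Set.range fun i : G.commonNeighbors u v =>
      p (mergeInto huv.ne v) - p (mergeInto huv.ne i)))
    {w : edgeWeights G}
    (hw : stressMap G E (p ∘ mergeInto huv.ne) w +
      w.1 u v • (Pi.single u (-z) + Pi.single v z) = 0) :
    w = 0 := by
  have hmap : mapWeights (mergeInto huv.ne) w = 0 := by
    refine mapWeights_eq_zero hp fun a => ?_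
    rw [eq_neg_of_add_eq_zero_left hw, sum_mergeInto_eq]
    obtain hu | hu := eq_or_ne u a
    · simp [← hu, huv.ne, huv.ne']
    · simp [hu, hu.symm, a.2]
  refine eq_zero_of_mapWeights_mergeInto_eq_zero huv.ne hmap <|
    weight_eq_zero_of_stressMap_add_smul (p := p ∘ mergeInto huv.ne)
      (congrArg p (mergeInto_left_eq_right huv.ne)) hli hz
      (fun x => weight_add_weight_eq_zero huv.ne hmap) ?_
  simpa [huv.ne'] using congrFun hw v

end

/-- Whiteley's vertex splitting: pull the vertices `u` and `v`, placed at the same point, apart in a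
direction `z` that is independent of the directions to their common neighbours. -/
theorem exists_injective_stressMap_of_contract {E : Type*} [NormedAddCommGroup E]
    [NormedSpace ℝ E] [FiniteDimensional ℝ E] (huv : G.Adj u v)
    (hcn : (G.commonNeighbors u v).ncard < Module.finrank ℝ E)
    (hG : ∃ p : {x // x ≠ v} → E, Function.Injective (stressMap (G.map (mergeInto huv.ne)) E p)) :
    ∃ p : V → E, Function.Injective (stressMap G E p) := by
  have hcard : Fintype.card (G.commonNeighbors u v) < Module.finrank ℝ E := by
    rwa [← Nat.card_eq_fintype_card]
  have hval (i : G.commonNeighbors u v) : (mergeInto huv.ne i : V) = i := by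
    rw [val_mergeInto, if_neg (G.ne_of_adj i.2.2).symm]
  obtain ⟨p, hp, hli⟩ := exists_injective_stressMap_and_linearIndependent
    (a := mergeInto huv.ne v) (b := fun i : G.commonNeighbors u v => mergeInto huv.ne i)
    (fun i j hij => Subtype.ext (by rw [← hval i, ← hval j]; exact congrArg Subtype.val hij))
    (fun i hi => (G.ne_of_adj i.2.1).symm (by
      rw [← hval i, hi, val_mergeInto, if_pos rfl]))
    hcard.le hG
  obtain ⟨z, -, hz⟩ := SetLike.exists_of_lt (Submodule.lt_top_of_finrank_lt_finrank
    ((finrank_range_le_card (R := ℝ) fun i : G.commonNeighbors u v =>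
      p (mergeInto huv.ne v) - p (mergeInto huv.ne i)).trans_lt hcard))
  have hq : (p ∘ mergeInto huv.ne) u = (p ∘ mergeInto huv.ne) v :=
    congrArg p (mergeInto_left_eq_right huv.ne)
  let ℓ : edgeWeights G →ₗ[ℝ] ℝ := .proj v ∘ₗ .proj (φ := fun _ : V => V → ℝ) u ∘ₗ
    (edgeWeights G).subtype
  have hinj : Function.Injective (stressMap G E (p ∘ mergeInto huv.ne) +
      ℓ.smulRight (stressMap G E (Pi.single v z) (singleWeight huv))) := by
    refine (injective_iff_map_eq_zero _).2 fun w hw =>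
      eq_zero_of_stressMap_add_smul huv hp hli hz ?_
    rwa [LinearMap.add_apply, LinearMap.smulRight_apply, stressMap_singleWeight,
      Pi.single_eq_same, Pi.single_eq_of_ne huv.ne, zero_sub, sub_zero] at hw
  obtain ⟨s, hs⟩ := exists_injective_add_smul (x₀ := singleWeight huv) (if_pos rfl)
    (by rw [stressMap_singleWeight, hq, sub_self, Pi.single_zero, Pi.single_zero, add_zero]) hinj
  refine ⟨Pi.single v z + s • (p ∘ mergeInto huv.ne), ?_⟩
  rwa [map_add, map_smul]

end VertexSplitting

section Existence

universe u

theorem exists_injective_stressMap {V : Type u} [Fintype V] {G : SimpleGraph V} {r : ℕ}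
    {E : Type*} [NormedAddCommGroup E] [NormedSpace ℝ E] [FiniteDimensional ℝ E] (hr : r ≤ 6)
    (hE : r ≤ Module.finrank ℝ E + 2) (hG : ¬ HasMinor G (⊤ : SimpleGraph (Fin r))) :
    ∃ p : V → E, Function.Injective (stressMap G E p) := by
  induction hn : Fintype.card V using Nat.strong_induction_on generalizing V with
  | _ n ih =>
  by_cases hedge : ∃ x y, G.Adj x y
  · obtain ⟨x, y, hxy, hcn⟩ := exists_adj_ncard_commonNeighbors_add_three_le hr hG hedge
    have hcard : Fintype.card {z // z ≠ y} < n := hn ▸ Fintype.card_subtype_lt (not_not.2 rfl)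
    exact exists_injective_stressMap_of_contract hxy (by omega)
      (ih _ hcard (fun h => hG ((hasMinor_contract hxy).trans h)) rfl)
  · exact exists_injective_stressMap_of_forall_not_adj fun x y h => hedge ⟨x, y, h⟩

end Existence

end KrMinor

/-- For every integer `r` with `2 ≤ r ≤ 6`, every finite simple graph with no
`K_r` minor is generically `(r-2)`-stress free. -/
theorem krMinorFree_genericallyStressFree {V : Type*} [Fintype V] (G : SimpleGraph V)
    (r : ℕ) (hr2 : 2 ≤ r) (hr6 : r ≤ 6)
    (hfree : ¬ HasMinor G (⊤ : SimpleGraph (Fin r))) :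
    GenericallyStressFree G (r - 2) :=
  KrMinor.genericallyStressFree_of_exists_injective
    (KrMinor.exists_injective_stressMap hr6 (by rw [finrank_euclideanSpace_fin]; omega) hfree)
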